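/- Let κ be a partition with at most n parts and assume the symmetric Macdonald polynomial P_κ exists. Then P_κ(1,t,t^2,…,t^{n−1})·h_κ(q,t) = t^{l(κ)}·b_κ(q,t), as an identity in ℚ(q,t), where P_κ(1,t,…,t^{n−1}) denotes the evaluation of P_κ at x_i=t^{i−1} for 1≤i≤n. -/

import Mathlib

/- STATEMENT 19: for a partition κ, P_κ(1,t,t^2,…,t^{n−1})·h_κ(q,t) = t^{l(κ)}·b_κ(q,t). -/

open Finset MvPolynomial

namespace Stmt19

/-- leg colength l'_η(i) -/
def legCo (n : ℕ) (η : Fin n → ℕ) (i : Fin n) : ℕ :=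
  (univ.filter fun k => k < i ∧ η i ≤ η k).card +
  (univ.filter fun k => i < k ∧ η i < η k).card

/-- leg length l(s) of the node s = (i,j) -/
def leg (n : ℕ) (η : Fin n → ℕ) (i : Fin n) (j : ℕ) : ℕ :=
  (univ.filter fun k => i < k ∧ j ≤ η k ∧ η k ≤ η i).card +
  (univ.filter fun k => k < i ∧ j ≤ η k + 1 ∧ η k + 1 ≤ η i).card

/-- The field K = ℚ(q,t). -/
abbrev K : Type := FractionRing (MvPolynomial (Fin 2) ℚ)

noncomputable def q : K := algebraMap (MvPolynomial (Fin 2) ℚ) K (X 0)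
noncomputable def t : K := algebraMap (MvPolynomial (Fin 2) ℚ) K (X 1)

/-- The polynomial ring K[x_1,…,x_n]. -/
abbrev P (n : ℕ) : Type := MvPolynomial (Fin n) K

/-- the automorphism s_k exchanging x_k and x_{k+1} (0-indexed; identity out of range) -/
noncomputable def sOp (n : ℕ) (k : ℕ) : P n →ₗ[K] P n :=
  if h : k + 1 < n then
    (rename (Equiv.swap (⟨k, Nat.lt_of_succ_lt h⟩ : Fin n) ⟨k + 1, h⟩)).toLinearMap
  else LinearMap.id

/-- τ_1 : x_1 ↦ qv·x_1 (the first variable is 0-indexed) -/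
noncomputable def tauOp (n : ℕ) (qv : K) : P n →ₗ[K] P n :=
  (aeval (fun j : Fin n => if (j : ℕ) = 0 then C qv * X j else X j)).toLinearMap

/-- ω := s_{n−1}⋯s_2 s_1 τ_1 -/
noncomputable def omegaOp (n : ℕ) (qv : K) : P n →ₗ[K] P n :=
  (List.range (n - 1)).foldl (fun acc k => sOp n k ∘ₗ acc) (tauOp n qv)

/-- The defining property of the Demazure–Lustig operators T_k (0-indexed), for the
parameter value tv: (x_k − x_{k+1})·(T_k f) = (x_k − x_{k+1})·tv·f
+ (tv·x_k − x_{k+1})·(s_k f − f), i.e. T_k f is the polynomial quotient from the usual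
definition. -/
def IsDL (n : ℕ) (tv : K) (T : ℕ → P n →ₗ[K] P n) : Prop :=
  ∀ k, ∀ hk : k + 1 < n, ∀ f : P n,
    (X (⟨k, Nat.lt_of_succ_lt hk⟩ : Fin n) - X ⟨k + 1, hk⟩) * T k f =
      (X (⟨k, Nat.lt_of_succ_lt hk⟩ : Fin n) - X ⟨k + 1, hk⟩) * (C tv * f) +
      (C tv * X (⟨k, Nat.lt_of_succ_lt hk⟩ : Fin n) - X ⟨k + 1, hk⟩) * (sOp n k f - f)

/-- T_k⁻¹ = tv⁻¹ − 1 + tv⁻¹ T_k -/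
noncomputable def Tinv (n : ℕ) (tv : K) (T : ℕ → P n →ₗ[K] P n) (k : ℕ) : P n →ₗ[K] P n :=
  tv⁻¹ • LinearMap.id - LinearMap.id + tv⁻¹ • T k

/-- The Cherednik operator Y_i (0-indexed i):
Y_i = tv^{i+1−n}·T_i⋯T_{n−2}·ω·T_0⁻¹⋯T_{i−1}⁻¹. -/
noncomputable def Yop (n : ℕ) (qv tv : K) (T : ℕ → P n →ₗ[K] P n) (i : Fin n) :
    P n →ₗ[K] P n :=
  (tv ^ (n - 1 - (i : ℕ)))⁻¹ •
    (((List.range' (i : ℕ) (n - 1 - (i : ℕ))).foldr (fun k acc => T k ∘ₗ acc) LinearMap.id) ∘ₗ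
      omegaOp n qv ∘ₗ
      ((List.range (i : ℕ)).foldr (fun k acc => Tinv n tv T k ∘ₗ acc) LinearMap.id))

/-- the decreasing rearrangement η⁺ of η -/
noncomputable def sortDesc (n : ℕ) (η : Fin n → ℕ) : Fin n → ℕ :=
  fun i => η (Tuple.sort η i.rev)

/-- dominance order on n-tuples (of equal sum) -/
def domLE (n : ℕ) (ν μ : Fin n → ℕ) : Prop :=
  (∑ i, ν i = ∑ i, μ i) ∧
  ∀ p : Fin n, ∑ i ∈ univ.filter (· ≤ p), ν i ≤ ∑ i ∈ univ.filter (· ≤ p), μ i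

def domLT (n : ℕ) (ν μ : Fin n → ℕ) : Prop := domLE n ν μ ∧ ν ≠ μ

/-- the order ≺ : ν ≺ η iff ν⁺ < η⁺, or ν⁺ = η⁺ and ν < η (dominance order) -/
noncomputable def prec (n : ℕ) (ν η : Fin n → ℕ) : Prop :=
  domLT n (sortDesc n ν) (sortDesc n η) ∨ (sortDesc n ν = sortDesc n η ∧ domLT n ν η)

/-- E is the non-symmetric Macdonald polynomial for the composition η (with parameters
qv, tv and Demazure–Lustig operators T): it has the triangular form
E = x^η + Σ_{ν≺η} b_{ην} x^ν and satisfies Y_i E = qv^{η_i}·tv^{−l'_η(i)}·E for all i. -/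
noncomputable def IsNSMac (n : ℕ) (qv tv : K) (T : ℕ → P n →ₗ[K] P n)
    (η : Fin n → ℕ) (E : P n) : Prop :=
  coeff (Finsupp.equivFunOnFinite.symm η) E = 1 ∧
  (∀ ν : Fin n →₀ ℕ, coeff ν E ≠ 0 → (ν : Fin n → ℕ) = η ∨ prec n (ν : Fin n → ℕ) η) ∧
  ∀ i : Fin n, Yop n qv tv T i E = (qv ^ η i / tv ^ legCo n η i) • E

/-- Pp is the symmetric Macdonald polynomial for the partition κ (with parameters qv, tv
and Demazure–Lustig operators T): it is symmetric, of the triangular form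
m_κ + Σ_{μ<κ} u_{κμ} m_μ, and satisfies (Σ_i Y_i) Pp = (Σ_i qv^{κ_i}·tv^{1−i}) Pp. -/
noncomputable def IsSymMac (n : ℕ) (qv tv : K) (T : ℕ → P n →ₗ[K] P n)
    (κ : Fin n → ℕ) (Pp : P n) : Prop :=
  Pp.IsSymmetric ∧
  coeff (Finsupp.equivFunOnFinite.symm κ) Pp = 1 ∧
  (∀ ν : Fin n →₀ ℕ, coeff ν Pp ≠ 0 →
    sortDesc n (ν : Fin n → ℕ) = κ ∨ domLT n (sortDesc n (ν : Fin n → ℕ)) κ) ∧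
  (∑ i : Fin n, Yop n qv tv T i) Pp = (∑ i : Fin n, qv ^ κ i * (tv ^ (i : ℕ))⁻¹) • Pp

/-- b_κ(q,t) = ∏_s (1 − q^{a'(s)} t^{n−l'(s)}) -/
noncomputable def bP (n : ℕ) (κ : Fin n → ℕ) : K :=
  ∏ i : Fin n, ∏ j ∈ Finset.Icc 1 (κ i), (1 - q ^ (j - 1) * t ^ (n - legCo n κ i))

/-- h_κ(q,t) = ∏_s (1 − q^{a(s)} t^{l(s)+1}) -/
noncomputable def hP (n : ℕ) (κ : Fin n → ℕ) : K :=
  ∏ i : Fin n, ∏ j ∈ Finset.Icc 1 (κ i), (1 - q ^ (κ i - j) * t ^ (leg n κ i j + 1))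

/-- l(κ) = Σ_s l(s) -/
def lTot (n : ℕ) (κ : Fin n → ℕ) : ℕ :=
  ∑ i : Fin n, ∑ j ∈ Finset.Icc 1 (κ i), leg n κ i j

end Stmt19

open Stmt19

open Finset MvPolynomial Stmt19
namespace Stmt19P
set_option linter.unusedSimpArgs false

variable {N : ℕ} {T : ℕ → P (N+1) →ₗ[K] P (N+1)}

/-- the exchange automorphism -/
noncomputable def sg (k : Fin N) : P (N+1) →ₐ[K] P (N+1) :=
  rename (Equiv.swap k.castSucc k.succ)

theorem sOp_eq (k : Fin N) (f : P (N+1)) : sOp (N+1) k f = sg k f := by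
  have h : (k:ℕ) + 1 < N + 1 := by omega
  unfold sOp
  rw [dif_pos h]
  rfl

theorem sg_X (k : Fin N) (i : Fin (N+1)) :
    sg k (X i) = X (Equiv.swap k.castSucc k.succ i) := by
  simp [sg]

theorem sg_C (k : Fin N) (c : K) : sg k (C c) = C c := by
  simp [sg]

theorem sg_fst (k : Fin N) : sg k (X k.castSucc) = X k.succ := by
  rw [sg_X, Equiv.swap_apply_left]

theorem sg_snd (k : Fin N) : sg k (X k.succ) = X k.castSucc := by
  rw [sg_X, Equiv.swap_apply_right]

theorem sg_oth (k : Fin N) (i : Fin (N+1)) (h1 : i ≠ k.castSucc) (h2 : i ≠ k.succ) :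
    sg k (X i) = X i := by
  rw [sg_X, Equiv.swap_apply_of_ne_of_ne h1 h2]

theorem sg_sg (k : Fin N) (f : P (N+1)) : sg k (sg k f) = f := by
  unfold sg
  rw [rename_rename]
  have : (⇑(Equiv.swap k.castSucc k.succ) ∘ ⇑(Equiv.swap k.castSucc k.succ)) = id := by
    funext i; simp
  rw [this, rename_id_apply]

theorem d_ne (i j : Fin (N+1)) (h : i ≠ j) : (X i - X j : P (N+1)) ≠ 0 := by
  intro h0
  exact h (X_injective (sub_eq_zero.mp h0))

theorem dk_ne (k : Fin N) : (X k.castSucc - X k.succ : P (N+1)) ≠ 0 :=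
  d_ne _ _ (ne_of_lt k.castSucc_lt_succ)

theorem DL (hT : IsDL (N+1) t T) (k : Fin N) (f : P (N+1)) :
    (X k.castSucc - X k.succ) * T k f =
      (1 - C t) * X k.succ * f + (C t * X k.castSucc - X k.succ) * sg k f := by
  have h := hT k (by omega) f
  rw [sOp_eq] at h
  have e1 : (⟨(k:ℕ), by omega⟩ : Fin (N+1)) = k.castSucc := rfl
  have e2 : (⟨(k:ℕ)+1, by omega⟩ : Fin (N+1)) = k.succ := rfl
  rw [e1, e2] at h
  linear_combination h

theorem DLu (hT : IsDL (N+1) t T) (k : Fin N) (f g : P (N+1))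
    (h : (X k.castSucc - X k.succ) * g =
      (1 - C t) * X k.succ * f + (C t * X k.castSucc - X k.succ) * sg k f) : T k f = g := by
  apply mul_left_cancel₀ (dk_ne k)
  rw [DL hT, h]

theorem T_map (hT : IsDL (N+1) t T) (k l : Fin N) (φ : P (N+1) →ₐ[K] P (N+1)) (c : K)
    (hc : c ≠ 0)
    (h1 : φ (X k.castSucc) = C c * X l.castSucc) (h2 : φ (X k.succ) = C c * X l.succ)
    (h3 : ∀ f, φ (sg k f) = sg l (φ f)) (f : P (N+1)) : φ (T k f) = T l (φ f) := by
  symm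
  apply DLu hT
  have h := congrArg φ (DL hT k f)
  have hC : φ (C t) = C t := φ.commutes t
  simp only [map_mul, map_add, map_sub, map_one, h1, h2, h3, hC] at h
  have hc' : (C c : P (N+1)) ≠ 0 := by simpa using hc
  apply mul_left_cancel₀ hc'
  linear_combination h

theorem T_mul (hT : IsDL (N+1) t T) (k : Fin N) (M f : P (N+1)) (hM : sg k M = M) :
    T k (M * f) = M * T k f := by
  apply DLu hT
  rw [map_mul, hM]
  linear_combination M * DL hT k f

theorem T_mul_fst (hT : IsDL (N+1) t T) (k : Fin N) (f : P (N+1)) :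
    T k (X k.castSucc * f) = X k.succ * (T k f + f - C t * f) := by
  apply DLu hT
  rw [map_mul, sg_fst]
  linear_combination X k.succ * DL hT k f

theorem T_mul_snd (hT : IsDL (N+1) t T) (k : Fin N) (f : P (N+1)) :
    T k (X k.succ * f) = X k.castSucc * T k f - (1 - C t) * X k.succ * f := by
  apply DLu hT
  rw [map_mul, sg_snd]
  linear_combination X k.castSucc * DL hT k f

theorem T_quad (hT : IsDL (N+1) t T) (k : Fin N) (f : P (N+1)) :
    T k (T k f) = (C t - 1) * T k f + C t * f := by
  apply DLu hT
  have h := DL hT k f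
  have h2 := congrArg (sg k) h
  simp only [map_mul, map_add, map_sub, map_one, sg_fst, sg_snd, sg_sg, sg_C] at h2
  apply mul_left_cancel₀ (dk_ne k)
  linear_combination (C t - 1) * X k.castSucc * h + (C t * X k.castSucc - X k.succ) * h2

theorem sg_comm (k l : Fin N) (h : (k:ℕ) + 1 < l) (f : P (N+1)) :
    sg k (sg l f) = sg l (sg k f) := by
  unfold sg
  rw [rename_rename, rename_rename]
  congr 2
  have hd : Equiv.Perm.Disjoint (Equiv.swap k.castSucc k.succ) (Equiv.swap l.castSucc l.succ) := by
    intro i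
    by_cases h1 : i = k.castSucc
    · right; apply Equiv.swap_apply_of_ne_of_ne <;> (subst h1; simp [Fin.ext_iff]; omega)
    by_cases h2 : i = k.succ
    · right; apply Equiv.swap_apply_of_ne_of_ne <;> (subst h2; simp [Fin.ext_iff]; omega)
    left; exact Equiv.swap_apply_of_ne_of_ne h1 h2
  have := hd.commute
  funext i
  exact congrArg (fun e : Equiv.Perm (Fin (N+1)) => e i) this

theorem sg_T_comm (hT : IsDL (N+1) t T) (k l : Fin N) (h : (k:ℕ) + 1 < l) (f : P (N+1)) :
    sg k (T l f) = T l (sg k f) := by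
  apply T_map hT l l (sg k) 1 one_ne_zero
  · rw [sg_oth] <;> simp [Fin.ext_iff] <;> omega
  · rw [sg_oth] <;> simp [Fin.ext_iff] <;> omega
  · exact sg_comm k l h

theorem T_comm (hT : IsDL (N+1) t T) (k l : Fin N) (h : (k:ℕ) + 1 < l) (f : P (N+1)) :
    T k (T l f) = T l (T k f) := by
  apply DLu hT
  rw [sg_T_comm hT k l h]
  have e1 := DL hT l f
  have e2 := DL hT l (sg k f)
  have e3 := DL hT l (T k f)
  have e4 := DL hT k f
  have e5 := congrArg (sg l) e4
  have s1 : sg l (X k.castSucc) = X k.castSucc := by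
    rw [sg_oth] <;> simp [Fin.ext_iff] <;> omega
  have s2 : sg l (X k.succ) = X k.succ := by
    rw [sg_oth] <;> simp [Fin.ext_iff] <;> omega
  simp only [map_mul, map_add, map_sub, map_one, sg_C, s1, s2] at e5
  apply mul_left_cancel₀ (dk_ne l)
  linear_combination (X k.castSucc - X k.succ) * e3 + (1 - C t) * X l.succ * e4 +
    (C t * X l.castSucc - X l.succ) * e5 - (1 - C t) * X k.succ * e1 -
    (C t * X k.castSucc - X k.succ) * e2

theorem sg_braid (k l : Fin N) (h : (k:ℕ) + 1 = l) (f : P (N+1)) :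
    sg k (sg l (sg k f)) = sg l (sg k (sg l f)) := by
  unfold sg
  simp only [rename_rename]
  congr 2
  funext i
  have hkl : k.succ = l.castSucc := by simp [Fin.ext_iff]; omega
  have n1 : k.castSucc ≠ l.castSucc := by simp [Fin.ext_iff]; omega
  have n2 : k.castSucc ≠ l.succ := by simp [Fin.ext_iff]; omega
  have n3 : l.castSucc ≠ l.succ := by simp [Fin.ext_iff]
  simp only [Function.comp, hkl]
  generalize l.castSucc = b at *
  generalize l.succ = c at *
  generalize k.castSucc = a at *
  simp only [Equiv.swap_apply_def]
  split_ifs <;> simp_all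

theorem T_braid (hT : IsDL (N+1) t T) (k l : Fin N) (h : (k:ℕ) + 1 = l) (f : P (N+1)) :
    T k (T l (T k f)) = T l (T k (T l f)) := by
  have hkl : k.succ = l.castSucc := by simp [Fin.ext_iff]; omega
  have n1 : k.castSucc ≠ l.castSucc := by simp [Fin.ext_iff]; omega
  have n2 : k.castSucc ≠ l.succ := by simp [Fin.ext_iff]; omega
  have n3 : l.castSucc ≠ l.succ := by simp [Fin.ext_iff]
  have hb := sg_braid k l h f
  have D1 := fun g => DL hT k g
  have D2 := fun g => DL hT l g
  have ks1 := sg_fst k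
  have ks2 := sg_snd k
  have ls1 := sg_fst l
  have ls2 := sg_snd l
  have ks3 := sg_oth k l.succ n2.symm (by rw [hkl]; exact n3.symm)
  have ls3 := sg_oth l k.castSucc n1 n2
  have Q1 := d_ne _ _ n1
  have Q2 := d_ne _ _ n2
  have Q3 := d_ne _ _ n3
  simp only [hkl] at *
  set a : P (N+1) := X k.castSucc
  set b : P (N+1) := X l.castSucc
  set c : P (N+1) := X l.succ
  -- left side
  have u0 := D1 f
  have u1 := congrArg (sg k) u0
  have u2 := congrArg (sg l) u0
  simp only [map_mul, map_add, map_sub, map_one, sg_sg, sg_C, ks1, ks2, ks3, ls1, ls2, ls3] at u1 u2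
  have u3 := congrArg (sg k) u2
  simp only [map_mul, map_add, map_sub, map_one, sg_sg, sg_C, ks1, ks2, ks3, ls1, ls2, ls3] at u3
  have v0 := D2 (T k f)
  have v1 := congrArg (sg k) v0
  simp only [map_mul, map_add, map_sub, map_one, sg_sg, sg_C, ks1, ks2, ks3, ls1, ls2, ls3] at v1
  have w0 := D1 (T l (T k f))
  -- right side
  have u0' := D2 f
  have u1' := congrArg (sg l) u0'
  have u2' := congrArg (sg k) u0'
  simp only [map_mul, map_add, map_sub, map_one, sg_sg, sg_C, ks1, ks2, ks3, ls1, ls2, ls3] at u1' u2'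
  have u3' := congrArg (sg l) u2'
  simp only [map_mul, map_add, map_sub, map_one, sg_sg, sg_C, ks1, ks2, ks3, ls1, ls2, ls3] at u3'
  have v0' := D1 (T l f)
  have v1' := congrArg (sg l) v0'
  simp only [map_mul, map_add, map_sub, map_one, sg_sg, sg_C, ks1, ks2, ks3, ls1, ls2, ls3] at v1'
  have w0' := D2 (T k (T l f))
  rw [← hb] at u3'
  generalize T k (T l (T k f)) = w at *
  generalize T l (T k (T l f)) = w' at *
  generalize sg k (T l (T k f)) = sv at *
  generalize T l (T k f) = v at *
  generalize sg l (T k (T l f)) = sv' at *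
  generalize T k (T l f) = v' at *
  generalize sg k (sg l (T k f)) = sru at *
  generalize sg l (T k f) = ru at *
  generalize sg k (T k f) = su at *
  generalize T k f = u at *
  generalize sg l (sg k (T l f)) = sru' at *
  generalize sg k (T l f) = ru' at *
  generalize sg l (T l f) = su' at *
  generalize T l f = u' at *
  generalize sg k (sg l (sg k f)) = f6 at *
  generalize sg k (sg l f) = f5 at *
  generalize sg l (sg k f) = f4 at *
  generalize sg k f = f3 at *
  generalize sg l f = f2 at *
  generalize (C t : P (N+1)) = τ at *
  have L : (a-b)^2*(b-c)*(a-c) * w = (1-τ)*b*((1-τ)*c)*(a-c)*((1-τ)*b*f+(τ*a-b)*f3)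
     + (1-τ)*b*(τ*b-c)*(a-b)*((1-τ)*c*f2+(τ*a-c)*f4)
     - (τ*a-b)*((1-τ)*c)*(b-c)*((1-τ)*a*f3+(τ*b-a)*f)
     + (τ*a-b)*(τ*a-c)*(a-b)*((1-τ)*c*f5+(τ*b-c)*f6) := by
    linear_combination (a-b)*(b-c)*(a-c)*w0 + (1-τ)*b*(a-b)*(a-c)*v0 + (τ*a-b)*(a-b)*(b-c)*v1
      + (1-τ)*b*((1-τ)*c)*(a-c)*u0 + (1-τ)*b*(τ*b-c)*(a-b)*u2 - (τ*a-b)*((1-τ)*c)*(b-c)*u1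
      + (τ*a-b)*(τ*a-c)*(a-b)*u3
  have R : (b-c)^2*(a-b)*(a-c) * w' = (1-τ)*c*((1-τ)*b)*(a-c)*((1-τ)*c*f+(τ*b-c)*f2)
     + (1-τ)*c*(τ*a-b)*(b-c)*((1-τ)*c*f3+(τ*a-c)*f5)
     - (τ*b-c)*((1-τ)*c)*(a-b)*((1-τ)*b*f2+(τ*c-b)*f)
     + (τ*b-c)*(τ*a-c)*(b-c)*((1-τ)*b*f4+(τ*a-b)*f6) := by
    linear_combination (a-b)*(b-c)*(a-c)*w0' + (1-τ)*c*(b-c)*(a-c)*v0' + (τ*b-c)*(a-b)*(b-c)*v1'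
      + (1-τ)*c*((1-τ)*b)*(a-c)*u0' + (1-τ)*c*(τ*a-b)*(b-c)*u2' - (τ*b-c)*((1-τ)*c)*(a-b)*u1'
      + (τ*b-c)*(τ*a-c)*(b-c)*u3'
  have hQ : (a-b)^2*(b-c)^2*(a-c) ≠ 0 := mul_ne_zero (mul_ne_zero (pow_ne_zero _ Q1) (pow_ne_zero _ Q3)) Q2
  apply mul_left_cancel₀ hQ
  linear_combination (b-c) * L - (a-b) * R

end Stmt19P

open Finset MvPolynomial Stmt19
namespace Stmt19P

section abstr
variable {F : Type*} [Field F] {R : Type*} [Ring R] [Algebra F R]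

/-- product T_j T_{j+1} ... T_{j+m-1} -/
def Cp (S : ℕ → R) : ℕ → ℕ → R
  | _, 0 => 1
  | j, m + 1 => S j * Cp S (j+1) m

theorem Cp_snoc (S : ℕ → R) (j m : ℕ) : Cp S j (m+1) = Cp S j m * S (j+m) := by
  induction m generalizing j with
  | zero => simp [Cp]
  | succ m ih =>
    rw [Cp, ih (j+1), Cp, mul_assoc]
    congr 3
    omega

theorem Cp_comm (S : ℕ → R) (z : R) (j m : ℕ)
    (h : ∀ a, j ≤ a → a < j + m → z * S a = S a * z) : z * Cp S j m = Cp S j m * z := by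
  induction m generalizing j with
  | zero => simp [Cp]
  | succ m ih =>
    rw [Cp, ← mul_assoc, h j le_rfl (by omega), mul_assoc, ih (j+1), mul_assoc]
    intro a h1 h2
    exact h a (by omega) (by omega)

/-- braid relations -/
structure Br (N : ℕ) (S : ℕ → R) : Prop where
  comm : ∀ k l, k + 1 < l → l < N → S k * S l = S l * S k
  braid : ∀ k, k + 1 < N → S k * S (k+1) * S k = S (k+1) * S k * S (k+1)

theorem Br.far {N : ℕ} {S : ℕ → R} (h : Br N S) (k l : ℕ) (hk : k < N) (hl : l < N)
    (hkl : k + 1 < l ∨ l + 1 < k) : S k * S l = S l * S k := by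
  rcases hkl with h1 | h1
  · exact h.comm k l h1 hl
  · exact (h.comm l k h1 hk).symm

theorem Br.shift {N : ℕ} {S : ℕ → R} (h : Br N S) (j m l : ℕ) (h1 : j ≤ l) (h2 : l + 1 < j + m)
    (h3 : j + m ≤ N) : S (l+1) * Cp S j m = Cp S j m * S l := by
  induction m generalizing j with
  | zero => omega
  | succ m ih =>
    rw [Cp]
    by_cases hj : j = l
    · subst hj
      obtain ⟨m, rfl⟩ : ∃ m', m = m' + 1 := ⟨m - 1, by omega⟩
      rw [Cp]
      have hc : S j * Cp S (j+1+1) m = Cp S (j+1+1) m * S j := by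
        apply Cp_comm
        intro a ha1 ha2
        exact h.comm _ _ (by omega) (by omega)
      rw [mul_assoc (S j), mul_assoc (S (j+1)), ← hc, ← mul_assoc, ← mul_assoc, ← mul_assoc,
        ← mul_assoc, h.braid j (by omega)]
    · rw [← mul_assoc, ← h.comm j (l+1) (by omega) (by omega), mul_assoc, ih (j+1) (by omega)
        (by omega) (by omega), mul_assoc]

/-- the relations among the operators -/
structure Hk (N : ℕ) (τ qq : F) (T Ti M : ℕ → R) (w : R) : Prop where
  br : Br N T
  inv1 : ∀ k, k < N → T k * Ti k = 1
  inv2 : ∀ k, k < N → Ti k * T k = 1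
  tid : ∀ k, k < N → τ • Ti k = T k + (1 - τ) • (1:R)
  wT : ∀ k, k + 1 < N → w * T (k+1) = T k * w
  wwT : ∀ m, N = m + 1 → w * w * T 0 = T m * (w * w)
  TM : ∀ k, k < N → T k * M k = τ • (M (k+1) * Ti k)
  TMN : ∀ k, k + 1 < N → T k * M N = M N * T k
  wM : ∀ k, k < N → w * M (k+1) = M k * w
  wM0 : w * M 0 = qq • (M N * w)
  t0 : τ ≠ 0

/-- abstract Cherednik operators -/
def Ya (N : ℕ) (τ : F) (T Ti : ℕ → R) (w : R) (i : ℕ) : R :=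
  (τ ^ (N - i))⁻¹ • (Cp T i (N - i) * w * Cp Ti 0 i)

variable {N : ℕ} {τ qq : F} {T Ti M : ℕ → R} {w : R}

theorem inv_move {a b c a' c' : R} (h : a * b = b * c) (h1 : a' * a = 1) (h2 : c * c' = 1) :
    a' * b = b * c' := by
  calc a' * b = a' * b * (c * c') := by rw [h2, mul_one]
    _ = a' * (b * c) * c' := by simp only [mul_assoc]
    _ = a' * (a * b) * c' := by rw [h]
    _ = (a' * a) * b * c' := by simp only [mul_assoc]
    _ = b * c' := by rw [h1, one_mul]

theorem Hk.comm_inv (h : Hk N τ qq T Ti M w) (z : R) (k : ℕ) (hk : k < N)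
    (hz : T k * z = z * T k) : Ti k * z = z * Ti k :=
  inv_move hz (h.inv2 k hk) (h.inv1 k hk)

theorem Hk.bri (h : Hk N τ qq T Ti M w) : Br N Ti := by
  constructor
  · intro k l hkl hl
    apply h.comm_inv _ _ (by omega)
    symm
    apply h.comm_inv _ _ hl
    exact (h.br.comm k l hkl hl).symm
  · intro k hk
    have hb := h.br.braid k hk
    have a1 := h.inv1 k (by omega)
    have a2 := h.inv2 k (by omega)
    have b1 := h.inv1 (k+1) (by omega)
    have b2 := h.inv2 (k+1) (by omega)
    have e1 : (Ti k * Ti (k+1) * Ti k) * (T k * T (k+1) * T k) = 1 := by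
      calc _ = Ti k * Ti (k+1) * (Ti k * T k) * T (k+1) * T k := by simp only [mul_assoc]
        _ = Ti k * (Ti (k+1) * T (k+1)) * T k := by rw [a2]; simp only [mul_assoc, mul_one, one_mul]
        _ = 1 := by rw [b2, mul_one, a2]
    have e2 : (T (k+1) * T k * T (k+1)) * (Ti (k+1) * Ti k * Ti (k+1)) = 1 := by
      calc _ = T (k+1) * T k * (T (k+1) * Ti (k+1)) * Ti k * Ti (k+1) := by simp only [mul_assoc]
        _ = T (k+1) * (T k * Ti k) * Ti (k+1) := by rw [b1]; simp only [mul_assoc, mul_one, one_mul]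
        _ = 1 := by rw [a1, mul_one, b1]
    rw [← hb] at e2
    exact left_inv_eq_right_inv e1 e2

theorem Hk.TY (h : Hk N τ qq T Ti M w) (j i : ℕ) (hj : j < N) (hi : i ≤ N) (h1 : i ≠ j)
    (h2 : i ≠ j + 1) : T j * Ya N τ T Ti w i = Ya N τ T Ti w i * T j := by
  unfold Ya
  rw [mul_smul_comm, smul_mul_assoc]
  congr 1
  rcases lt_or_gt_of_ne h1 with hlt | hgt
  · obtain ⟨l, rfl⟩ : ∃ l, j = l + 1 := ⟨j - 1, by omega⟩
    have e1 := h.br.shift i (N - i) l (by omega) (by omega) (by omega)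
    have e2 : T (l+1) * Cp Ti 0 i = Cp Ti 0 i * T (l+1) := by
      apply Cp_comm
      intro a _ ha
      symm
      apply h.comm_inv _ _ (by omega)
      exact h.br.comm _ _ (by omega) hj
    rw [mul_assoc _ _ (T (l+1)), ← e2, ← mul_assoc, ← mul_assoc, e1, mul_assoc (Cp T i (N-i)),
      ← h.wT l hj]
    simp only [mul_assoc]
  · have e1 : T j * Cp T i (N - i) = Cp T i (N - i) * T j := by
      apply Cp_comm
      intro a ha1 ha2
      exact h.br.comm _ _ (by omega) (by omega)
    have e2 := h.bri.shift 0 i j (by omega) (by omega) (by omega)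
    have e3 : T (j+1) * Cp Ti 0 i = Cp Ti 0 i * T j :=
      inv_move e2 (h.inv1 _ (by omega)) (h.inv2 _ (by omega))
    rw [mul_assoc _ _ (T j), ← e3, ← mul_assoc, ← mul_assoc, e1, mul_assoc (Cp T i (N-i)),
      ← h.wT j (by omega)]
    simp only [mul_assoc]

theorem Hk.Yrec (h : Hk N τ qq T Ti M w) (i : ℕ) (hi : i < N) :
    Ya N τ T Ti w (i+1) * T i = τ • (Ti i * Ya N τ T Ti w i) := by
  unfold Ya
  obtain ⟨m, hm⟩ : ∃ m, N - i = m + 1 := ⟨N - i - 1, by omega⟩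
  have hm' : N - (i+1) = m := by omega
  rw [hm, hm', Cp_snoc Ti 0 i, Cp, smul_mul_assoc, mul_smul_comm, smul_smul]
  have : τ * (τ ^ (m+1))⁻¹ = (τ ^ m)⁻¹ := by
    have := h.t0
    field_simp
    ring
  rw [this]
  congr 1
  rw [zero_add]
  calc Cp T (i+1) m * w * (Cp Ti 0 i * Ti i) * T i
      = Cp T (i+1) m * w * (Cp Ti 0 i * (Ti i * T i)) := by simp only [mul_assoc]
    _ = Cp T (i+1) m * w * Cp Ti 0 i := by rw [h.inv2 i hi, mul_one]
    _ = (Ti i * T i) * Cp T (i+1) m * w * Cp Ti 0 i := by rw [h.inv2 i hi, one_mul]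
    _ = _ := by simp only [mul_assoc]

/-- Y_{i+1} T_i = (T_i + 1 - t) Y_i -/
theorem Hk.Yint (h : Hk N τ qq T Ti M w) (i : ℕ) (hi : i < N) :
    Ya N τ T Ti w (i+1) * T i = (T i + (1 - τ) • (1:R)) * Ya N τ T Ti w i := by
  rw [h.Yrec i hi, ← smul_mul_assoc, h.tid i hi]

/-- T_i Y_{i+1} = Y_i (T_i + 1 - t) -/
theorem Hk.Yint2 (h : Hk N τ qq T Ti M w) (i : ℕ) (hi : i < N) :
    T i * Ya N τ T Ti w (i+1) = Ya N τ T Ti w i * (T i + (1 - τ) • (1:R)) := by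
  have e := h.Yrec i hi
  rw [← h.tid i hi]
  calc T i * Ya N τ T Ti w (i+1) = T i * (Ya N τ T Ti w (i+1) * T i) * Ti i := by
        rw [mul_assoc, mul_assoc, h.inv1 i hi, mul_one]
    _ = τ • ((T i * Ti i) * Ya N τ T Ti w i * Ti i) := by
        rw [e]; simp only [mul_smul_comm, smul_mul_assoc, mul_assoc]
    _ = _ := by rw [h.inv1 i hi, one_mul, mul_smul_comm]

theorem Hk.sumY (h : Hk N τ qq T Ti M w) (j : ℕ) (hj : j < N) :
    T j * (∑ i ∈ range (N+1), Ya N τ T Ti w i) = (∑ i ∈ range (N+1), Ya N τ T Ti w i) * T j := by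
  rw [← add_sum_erase _ _ (mem_range.2 (show j < N + 1 by omega)),
    ← add_sum_erase _ _ (mem_erase.2 ⟨show j + 1 ≠ j by omega, mem_range.2 (show j + 1 < N + 1 by omega)⟩)]
  have e : T j * (∑ i ∈ ((range (N+1)).erase j).erase (j+1), Ya N τ T Ti w i) =
      (∑ i ∈ ((range (N+1)).erase j).erase (j+1), Ya N τ T Ti w i) * T j := by
    rw [mul_sum, sum_mul]
    apply sum_congr rfl
    intro i hi
    simp only [mem_erase, mem_range] at hi
    exact h.TY j i hj (by omega) hi.2.1 hi.1
  rw [mul_add, mul_add, add_mul, add_mul, e, h.Yint j hj, h.Yint2 j hj]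
  simp only [mul_add, add_mul, mul_smul_comm, smul_mul_assoc, mul_one, one_mul]
  abel

theorem Hk.PhiY (h : Hk N τ qq T Ti M w) (i : ℕ) (hi : i < N) :
    Ya N τ T Ti w i * (M N * w) = (M N * w) * Ya N τ T Ti w (i+1) := by
  unfold Ya
  obtain ⟨m, rfl⟩ : ∃ m, N = i + m + 1 := ⟨N - i - 1, by omega⟩
  have q1 : i + m + 1 - i = m + 1 := by omega
  have q2 : i + m + 1 - (i + 1) = m := by omega
  rw [q1, q2]
  set n := i + m + 1
  have e1 : Cp Ti 0 i * M n = M n * Cp Ti 0 i := by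
    symm; apply Cp_comm
    intro a _ ha
    symm
    exact h.comm_inv _ _ (by omega) (h.TMN a (by omega))
  have e2 : w * M n = M (i+m) * w := h.wM (i+m) (by omega)
  have e3 : T (i+m) * M (i+m) = τ • (M n * Ti (i+m)) := h.TM (i+m) (by omega)
  have e4 : Cp T i m * M n = M n * Cp T i m := by
    symm; apply Cp_comm
    intro a _ ha
    exact (h.TMN a (by omega)).symm
  have wTi : ∀ k, k + 1 < n → Ti k * w = w * Ti (k+1) := fun k hk =>
    inv_move (h.wT k hk).symm (h.inv2 k (by omega)) (h.inv1 (k+1) hk)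
  have e5 : ∀ j, j < n → Cp Ti 0 j * w = w * Cp Ti 1 j := by
    intro j
    induction j with
    | zero => intro _; simp [Cp]
    | succ j ih =>
      intro hj
      rw [Cp_snoc, Cp_snoc, mul_assoc, zero_add, wTi j hj, ← mul_assoc, ih (by omega), mul_assoc,
        add_comm 1 j]
  have e6 : Ti (i+m) * (w * w) = w * w * Ti 0 :=
    inv_move (h.wwT (i+m) rfl).symm (h.inv2 _ (by omega)) (h.inv1 0 (by omega))
  have e7 : ∀ l j, j + l < n → Cp T j l * w = w * Cp T (j+1) l := by
    intro l
    induction l with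
    | zero => intro j _; simp [Cp]
    | succ l ih =>
      intro j hj
      rw [Cp, Cp, mul_assoc, ih (j+1) (by omega), ← mul_assoc, ← h.wT j (by omega), mul_assoc]
  have hs : (τ ^ (m+1))⁻¹ * τ = (τ ^ m)⁻¹ := by
    have := h.t0
    field_simp
    ring
  rw [smul_mul_assoc, mul_smul_comm, ← hs, ← smul_smul]
  congr 1
  calc Cp T i (m+1) * w * Cp Ti 0 i * (M n * w)
      = Cp T i (m+1) * w * (Cp Ti 0 i * M n) * w := by simp only [mul_assoc]
    _ = Cp T i (m+1) * (w * M n) * (Cp Ti 0 i * w) := by rw [e1]; simp only [mul_assoc]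
    _ = Cp T i m * (T (i+m) * M (i+m)) * (w * w) * Cp Ti 1 i := by
        rw [e2, e5 i (by omega), Cp_snoc]; simp only [mul_assoc]
    _ = τ • ((Cp T i m * M n) * (Ti (i+m) * (w * w)) * Cp Ti 1 i) := by
        rw [e3]; simp only [mul_smul_comm, smul_mul_assoc, mul_assoc]
    _ = τ • (M n * (Cp T i m * w) * w * (Ti 0 * Cp Ti (0+1) i)) := by
        rw [e4, e6]; simp only [mul_assoc]
    _ = _ := by
        rw [e7 m i (by omega), ← Cp]; simp only [mul_assoc]

theorem Hk.PhiYN (h : Hk N τ qq T Ti M w) :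
    Ya N τ T Ti w N * (M N * w) = qq • ((M N * w) * Ya N τ T Ti w 0) := by
  unfold Ya
  have e1 : ∀ k, k < N → Ti k * M (k+1) = τ⁻¹ • (M k * T k) := by
    intro k hk
    have a := h.TM k hk
    have b : M k * T k = τ • (Ti k * M (k+1)) := by
      calc M k * T k = Ti k * (T k * M k) * T k := by
            rw [← mul_assoc, h.inv2 k hk, one_mul]
        _ = τ • (Ti k * M (k+1) * (Ti k * T k)) := by
            rw [a]; simp only [mul_smul_comm, smul_mul_assoc, mul_assoc]
        _ = _ := by rw [h.inv2 k hk, mul_one]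
    rw [b, smul_smul, inv_mul_cancel₀ h.t0, one_smul]
  have e2 : ∀ j, j ≤ N → Cp Ti 0 j * M j = (τ ^ j)⁻¹ • (M 0 * Cp T 0 j) := by
    intro j
    induction j with
    | zero => intro _; simp [Cp]
    | succ j ih =>
      intro hj
      rw [Cp_snoc, Cp_snoc, mul_assoc, zero_add, e1 j (by omega), mul_smul_comm, ← mul_assoc,
        ih (by omega), smul_mul_assoc, smul_smul, mul_assoc]
      congr 1
      rw [pow_succ, mul_inv, mul_comm]
  simp only [Nat.sub_self, Nat.sub_zero, pow_zero, inv_one, one_smul, Cp, one_mul, mul_one]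
  rw [mul_assoc, ← mul_assoc (Cp Ti 0 N), e2 N le_rfl, smul_mul_assoc, mul_smul_comm,
    mul_smul_comm, smul_comm qq]
  congr 1
  rw [← mul_assoc, ← mul_assoc, h.wM0]
  simp only [mul_smul_comm, smul_mul_assoc, mul_assoc]

end abstr
end Stmt19P

open Finset MvPolynomial Stmt19
namespace Stmt19P
set_option linter.unusedSimpArgs false

theorem t_ne : (t : K) ≠ 0 := by
  unfold t
  rw [Ne, FaithfulSMul.algebraMap_eq_zero_iff]
  exact X_ne_zero _

theorem q_ne : (q : K) ≠ 0 := by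
  unfold q
  rw [Ne, FaithfulSMul.algebraMap_eq_zero_iff]
  exact X_ne_zero _

variable {N : ℕ} {T : ℕ → P (N+1) →ₗ[K] P (N+1)}

/-- ω as an algebra homomorphism -/
noncomputable def om (N : ℕ) : P (N+1) →ₐ[K] P (N+1) :=
  aeval (Fin.cases (C q * X (Fin.last N)) (fun k : Fin N => X k.castSucc))

theorem om_zero : om N (X 0) = C q * X (Fin.last N) := by simp [om]

theorem om_succ (k : Fin N) : om N (X k.succ) = X k.castSucc := by simp [om]

theorem om_C (c : K) : om N (C c) = C c := (om N).commutes c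

/-- partial products of the definition of ω -/
noncomputable def omP (N m : ℕ) (hm : m < N + 1) : P (N+1) →ₐ[K] P (N+1) :=
  aeval (fun j : Fin (N+1) => if h0 : (j:ℕ) = 0 then C q * X ⟨m, hm⟩ else
    if (j:ℕ) ≤ m then X ⟨(j:ℕ) - 1, by omega⟩ else X j)

theorem omega_part (m : ℕ) (hm : m < N + 1) :
    (List.range m).foldl (fun acc k => sOp (N+1) k ∘ₗ acc) (tauOp (N+1) q) =
      (omP N m hm).toLinearMap := by
  induction m with
  | zero =>
    simp only [List.range_zero, List.foldl_nil]
    unfold tauOp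
    congr 1
    apply algHom_ext
    intro j
    simp only [omP, aeval_X]
    by_cases hj : (j:ℕ) = 0
    · have : j = ⟨0, hm⟩ := Fin.ext hj
      simp [this]
    · rw [if_neg hj, dif_neg hj, if_neg (by omega)]
  | succ m ih =>
    rw [List.range_succ, List.foldl_append, ih (by omega)]
    simp only [List.foldl_cons, List.foldl_nil]
    apply LinearMap.ext
    intro f
    rw [LinearMap.comp_apply]
    have := sOp_eq (N := N) ⟨m, by omega⟩ ((omP N m (by omega)) f)
    simp only at this
    rw [AlgHom.toLinearMap_apply, this]
    have h2 : (sg (⟨m, by omega⟩ : Fin N)).comp (omP N m (by omega)) = omP N (m+1) hm := by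
      apply algHom_ext
      intro j
      simp only [omP, aeval_X, AlgHom.comp_apply]
      by_cases hj : (j:ℕ) = 0
      · rw [dif_pos hj, dif_pos hj, map_mul, sg_C]
        congr 1
        exact sg_fst (⟨m, by omega⟩ : Fin N)
      · rw [dif_neg hj, dif_neg hj]
        by_cases h1 : (j:ℕ) ≤ m
        · rw [if_pos h1, if_pos (by omega), sg_oth]
          · intro h; have := congrArg Fin.val h; simp at this; omega
          · intro h; have := congrArg Fin.val h; simp at this; omega
        · rw [if_neg h1]
          by_cases h3 : (j:ℕ) = m + 1
          · rw [if_pos (by omega)]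
            have e : j = (⟨m, by omega⟩ : Fin N).succ := Fin.ext h3
            rw [e, sg_snd]
            congr 1
          · rw [if_neg (by omega), sg_oth]
            · intro h; have := congrArg Fin.val h; simp at this; omega
            · intro h; have := congrArg Fin.val h; simp at this; omega
    exact DFunLike.congr_fun h2 f

theorem omegaOp_eq : omegaOp (N+1) q = (om N).toLinearMap := by
  unfold omegaOp
  rw [Nat.add_sub_cancel, omega_part N (by omega)]
  congr 1
  apply algHom_ext
  intro j
  refine Fin.cases ?_ (fun k => ?_) j
  · rw [om_zero]; simp [omP]; left; rfl
  · rw [om_succ]; simp [omP]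
    rfl

theorem om_wT (hT : IsDL (N+1) t T) (k l : Fin N) (hkl : (k:ℕ) = l + 1) (f : P (N+1)) :
    om N (T k f) = T l (om N f) := by
  have a1 : k.castSucc = l.succ := Fin.ext (by simp [hkl])
  apply T_map hT k l (om N) 1 one_ne_zero
  · rw [a1, om_succ]; simp
  · have : k.castSucc = l.succ := Fin.ext (by simp [hkl])
    rw [om_succ, this]; simp
  · intro f
    have : (om N).comp (sg k) = (sg l).comp (om N) := by
      apply algHom_ext
      intro j
      simp only [AlgHom.comp_apply]
      by_cases h1 : j = k.castSucc
      · rw [h1, sg_fst, om_succ, a1, om_succ, sg_fst]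
      · by_cases h2 : j = k.succ
        · rw [h2, sg_snd, om_succ, a1, om_succ, sg_snd]
        · rw [sg_oth _ _ h1 h2]
          revert h1 h2
          refine Fin.cases ?_ (fun i => ?_) j
          · intro h1 h2
            rw [om_zero, map_mul, sg_C, sg_oth]
            · intro h; have := congrArg Fin.val h; simp at this; omega
            · intro h; have := congrArg Fin.val h; simp at this; omega
          · intro h1 h2
            rw [om_succ, sg_oth]
            · intro h
              apply h1
              apply Fin.ext
              have := congrArg Fin.val h; simp at this; simp; omega
            · intro h
              apply h2
              apply Fin.ext
              have := congrArg Fin.val h; simp at this; simp; omega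
    exact DFunLike.congr_fun this f

theorem om_wwT (hT : IsDL (N+1) t T) (k l : Fin N) (hk : (k:ℕ) = 0) (hl : (l:ℕ) + 1 = N) (f : P (N+1)) :
    om N (om N (T k f)) = T l (om N (om N f)) := by
  have a1 : k.castSucc = 0 := Fin.ext (by simp [hk])
  have a2 : l.succ = Fin.last N := Fin.ext (by simp [hl])
  have b1 : om N (om N (X k.castSucc)) = C q * X l.castSucc := by
    rw [a1, om_zero, map_mul, om_C, ← a2, om_succ]
  have b2 : om N (om N (X k.succ)) = C q * X l.succ := by
    rw [om_succ, a1, om_zero, a2]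
  apply T_map hT k l ((om N).comp (om N)) q q_ne
  · exact b1
  · exact b2
  · intro f
    have : ((om N).comp (om N)).comp (sg k) = (sg l).comp ((om N).comp (om N)) := by
      apply algHom_ext
      intro j
      simp only [AlgHom.comp_apply]
      by_cases h1 : j = k.castSucc
      · rw [h1, sg_fst, b1, b2, map_mul, sg_C, sg_fst]
      · by_cases h2 : j = k.succ
        · rw [h2, sg_snd, b1, b2, map_mul, sg_C, sg_snd]
        · rw [sg_oth _ _ h1 h2]
          obtain ⟨i, rfl⟩ := Fin.exists_succ_eq.mpr (show j ≠ 0 by rwa [a1] at h1)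
          rw [om_succ]
          have h3 : i.castSucc ≠ 0 := by
            intro h
            apply h2
            apply Fin.ext
            have := congrArg Fin.val h; simp at this; simp [hk]; exact this
          obtain ⟨i', hi'⟩ := Fin.exists_succ_eq.mpr h3
          have := congrArg Fin.val hi'; simp at this
          have := i.2
          rw [← hi', om_succ, sg_oth]
          · intro h; have := congrArg Fin.val h; simp at this; omega
          · intro h; have := congrArg Fin.val h; simp at this; omega
    exact DFunLike.congr_fun this f

/-- multiplication operator by x_k -/
noncomputable def MX (N : ℕ) (k : ℕ) : Module.End K (P (N+1)) :=
  if h : k < N + 1 then LinearMap.mulLeft K (X ⟨k, h⟩) else 0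

theorem MX_fin (i : Fin (N+1)) (f : P (N+1)) : MX N i f = X i * f := by
  unfold MX
  rw [dif_pos i.2]
  rfl

theorem MX_lt (k : ℕ) (h : k < N + 1) (f : P (N+1)) : MX N k f = X ⟨k, h⟩ * f := by
  unfold MX
  rw [dif_pos h]
  rfl

theorem Tinv_apply (k : ℕ) (f : P (N+1)) :
    Tinv (N+1) t T k f = C t⁻¹ * f - f + C t⁻¹ * T k f := by
  simp [Tinv, smul_eq_C_mul]

theorem Ct_mul : (C t : P (N+1)) * C t⁻¹ = 1 := by
  rw [← C_mul, mul_inv_cancel₀ t_ne, C_1]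

theorem hk (hT : IsDL (N+1) t T) :
    Hk (R := Module.End K (P (N+1))) N t q T (Tinv (N+1) t T) (MX N) (omegaOp (N+1) q) where
  br := {
    comm := by
      intro k l hkl hl
      apply LinearMap.ext; intro f
      exact T_comm hT ⟨k, by omega⟩ ⟨l, hl⟩ hkl f
    braid := by
      intro k hk
      apply LinearMap.ext; intro f
      exact T_braid hT ⟨k, by omega⟩ ⟨k+1, hk⟩ rfl f }
  inv1 := by
    intro k hk
    apply LinearMap.ext; intro f
    have := T_quad hT ⟨k, hk⟩ f
    simp only at this
    have e : T k (C t⁻¹ * f - f + C t⁻¹ * T k f) = C t⁻¹ * T k f - T k f + C t⁻¹ * T k (T k f) := by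
      simp only [← smul_eq_C_mul, map_add, map_sub, map_smul]
    rw [Module.End.mul_apply, Tinv_apply, e, this]
    have h := Ct_mul (N := N)
    simp only [Module.End.one_apply]
    linear_combination (T k f + f) * h
  inv2 := by
    intro k hk
    apply LinearMap.ext; intro f
    have := T_quad hT ⟨k, hk⟩ f
    simp only at this
    rw [Module.End.mul_apply, Tinv_apply, this]
    have h := Ct_mul (N := N)
    simp only [Module.End.one_apply]
    linear_combination (T k f + f) * h
  tid := by
    intro k hk
    apply LinearMap.ext; intro f
    rw [LinearMap.smul_apply, Tinv_apply, LinearMap.add_apply, LinearMap.smul_apply, smul_eq_C_mul,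
      smul_eq_C_mul]
    have h := Ct_mul (N := N)
    simp only [Module.End.one_apply, map_sub, C_1]
    linear_combination (T k f + f) * h
  wT := by
    intro k hk
    apply LinearMap.ext; intro f
    rw [omegaOp_eq]
    exact om_wT hT ⟨k+1, hk⟩ ⟨k, by omega⟩ rfl f
  wwT := by
    intro m hm
    apply LinearMap.ext; intro f
    rw [omegaOp_eq]
    exact om_wwT hT ⟨0, by omega⟩ ⟨m, by omega⟩ rfl hm.symm f
  TM := by
    intro k hk
    apply LinearMap.ext; intro f
    have := T_mul_fst hT ⟨k, hk⟩ f
    rw [Module.End.mul_apply, MX_lt k (by omega), LinearMap.smul_apply, Module.End.mul_apply,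
      MX_lt (k+1) (by omega), Tinv_apply, smul_eq_C_mul]
    have e : T k (X ⟨k, by omega⟩ * f) = X ⟨k+1, by omega⟩ * (T k f + f - C t * f) := this
    rw [e]
    have h := Ct_mul (N := N)
    linear_combination -(X ⟨k+1, by omega⟩ * (T k f + f)) * h
  TMN := by
    intro k hk
    apply LinearMap.ext; intro f
    rw [Module.End.mul_apply, Module.End.mul_apply, MX_lt N (by omega), MX_lt N (by omega)]
    apply T_mul hT ⟨k, by omega⟩
    rw [sg_oth]
    · intro h; have := congrArg Fin.val h; simp at this; omega
    · intro h; have := congrArg Fin.val h; simp at this; omega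
  wM := by
    intro k hk
    apply LinearMap.ext; intro f
    rw [omegaOp_eq, Module.End.mul_apply, Module.End.mul_apply, MX_lt k (by omega), MX_lt (k+1) (by omega)]
    simp only [AlgHom.toLinearMap_apply, map_mul]
    congr 1
    exact om_succ ⟨k, hk⟩
  wM0 := by
    apply LinearMap.ext; intro f
    rw [omegaOp_eq, Module.End.mul_apply, LinearMap.smul_apply, Module.End.mul_apply, MX_lt 0 (by omega), MX_lt N (by omega)]
    simp only [AlgHom.toLinearMap_apply, map_mul]
    have e : om N (X ⟨0, by omega⟩) = C q * X (Fin.last N) := om_zero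
    rw [e, smul_eq_C_mul, mul_assoc]
    rfl
  t0 := t_ne

theorem foldr_Cp (S : ℕ → Module.End K (P (N+1))) (j m : ℕ) :
    ((List.range' j m).foldr (fun k acc => S k ∘ₗ acc) LinearMap.id) = Cp S j m := by
  induction m generalizing j with
  | zero => rfl
  | succ m ih =>
    rw [List.range'_succ, List.foldr_cons, ih (j+1), Cp]
    rfl

theorem Yop_eq (i : Fin (N+1)) : Yop (N+1) q t T i =
    Ya (R := Module.End K (P (N+1))) N t T (Tinv (N+1) t T) (omegaOp (N+1) q) i := by
  unfold Yop Ya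
  rw [List.range_eq_range', foldr_Cp, foldr_Cp, Nat.add_sub_cancel]
  rfl

/-- evaluation at (1,t,t²,...) -/
noncomputable def ev (N : ℕ) : P (N+1) →ₐ[K] K := aeval (fun i : Fin (N+1) => t ^ (i:ℕ))

theorem ev_C (c : K) : ev N (C c) = c := (ev N).commutes c
theorem ev_X (i : Fin (N+1)) : ev N (X i) = t ^ (i:ℕ) := by simp [ev]

/-- the parameter elements of K are not roots of unity etc. -/
theorem qt_ne (a b : ℕ) (h : ¬ (a = 0 ∧ b = 0)) : (1 - q ^ a * t ^ b : K) ≠ 0 := by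
  unfold q t
  rw [← map_pow, ← map_pow, ← map_mul, ← map_one (algebraMap (MvPolynomial (Fin 2) ℚ) K), ← map_sub,
    Ne, FaithfulSMul.algebraMap_eq_zero_iff]
  intro h0
  have h1 := congrArg (eval (fun _ => (2:ℚ))) h0
  simp only [map_sub, map_one, map_mul, map_pow, eval_X, map_zero, ← pow_add] at h1
  have h2 : (1:ℚ) < 2 ^ (a + b) := one_lt_pow₀ (by norm_num) (by omega)
  linarith

theorem ev_T (hT : IsDL (N+1) t T) (k : Fin N) (f : P (N+1)) : ev N (T k f) = t * ev N f := by
  have h := congrArg (ev N) (DL hT k f)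
  simp only [map_mul, map_add, map_sub, map_one, ev_X, ev_C, Fin.val_castSucc, Fin.val_succ] at h
  have h1 : (t ^ (k:ℕ) - t ^ ((k:ℕ)+1) : K) ≠ 0 := by
    have := qt_ne 0 1 (by omega)
    have h2 := pow_ne_zero (k:ℕ) t_ne
    have e : (t ^ (k:ℕ) - t ^ ((k:ℕ)+1) : K) = t ^ (k:ℕ) * (1 - q ^ 0 * t ^ 1) := by ring
    rw [e]; exact mul_ne_zero h2 this
  apply mul_left_cancel₀ h1
  linear_combination h

theorem ev_Cp (hT : IsDL (N+1) t T) (j m : ℕ) (h : j + m ≤ N) (f : P (N+1)) :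
    ev N (Cp (R := Module.End K (P (N+1))) T j m f) = t ^ m * ev N f := by
  induction m generalizing j with
  | zero => simp [Cp]
  | succ m ih =>
    rw [Cp, Module.End.mul_apply]
    have := ev_T hT ⟨j, by omega⟩ (Cp (R := Module.End K (P (N+1))) T (j+1) m f)
    simp only at this
    rw [this, ih (j+1) (by omega)]
    ring

theorem ev_om (hT : IsDL (N+1) t T) (f : P (N+1)) :
    ev N (omegaOp (N+1) q f) = ev N (Yop (N+1) q t T 0 f) := by
  rw [Yop_eq, Ya]
  simp only [Fin.val_zero, Nat.sub_zero, Cp, mul_one, LinearMap.smul_apply, Module.End.mul_apply,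
    smul_eq_C_mul, map_mul, ev_C]
  rw [ev_Cp hT 0 N (by omega), inv_mul_cancel_left₀ (pow_ne_zero _ t_ne)]

end Stmt19P

open Finset MvPolynomial Stmt19
namespace Stmt19P
set_option linter.unusedSimpArgs false

variable {N : ℕ} {T : ℕ → P (N+1) →ₗ[K] P (N+1)}

/-- coefficient at an exponent tuple -/
noncomputable def cf {n : ℕ} (f : P n) (μ : Fin n → ℕ) : K :=
  coeff (Finsupp.equivFunOnFinite.symm μ) f

theorem cf_add {n : ℕ} (f g : P n) (μ : Fin n → ℕ) : cf (f + g) μ = cf f μ + cf g μ := coeff_add _ _ _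
theorem cf_sub {n : ℕ} (f g : P n) (μ : Fin n → ℕ) : cf (f - g) μ = cf f μ - cf g μ := coeff_sub _ _ _ _
theorem cf_zero {n : ℕ} (μ : Fin n → ℕ) : cf (0 : P n) μ = 0 := coeff_zero _
theorem cf_smul {n : ℕ} (c : K) (f : P n) (μ : Fin n → ℕ) : cf (c • f) μ = c * cf f μ := coeff_smul _ _ _
theorem cf_C_mul {n : ℕ} (c : K) (f : P n) (μ : Fin n → ℕ) : cf (C c * f) μ = c * cf f μ :=
  coeff_C_mul _ _ _
theorem cf_sum {n : ℕ} {ι : Type*} (s : Finset ι) (f : ι → P n) (μ : Fin n → ℕ) :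
    cf (∑ i ∈ s, f i) μ = ∑ i ∈ s, cf (f i) μ := coeff_sum _ _ _

theorem cf_ext {n : ℕ} (f g : P n) (h : ∀ μ, cf f μ = cf g μ) : f = g := by
  ext m
  have := h m
  unfold cf at this
  simpa using this

theorem cf_X_mul_pos {n : ℕ} (i : Fin n) (f : P n) (μ : Fin n → ℕ) (h : 0 < μ i) :
    cf (X i * f) μ = cf f (Function.update μ i (μ i - 1)) := by
  unfold cf
  rw [coeff_X_mul', if_pos]
  · congr 1
    ext j
    by_cases hj : j = i
    · subst hj; simp
    · simp [hj, Finsupp.single_apply, Ne.symm hj]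
  · simp; omega

theorem cf_X_mul_zero {n : ℕ} (i : Fin n) (f : P n) (μ : Fin n → ℕ) (h : μ i = 0) :
    cf (X i * f) μ = 0 := by
  unfold cf
  rw [coeff_X_mul', if_neg]
  simp; omega

theorem cf_rename {n : ℕ} (σ : Equiv.Perm (Fin n)) (f : P n) (μ : Fin n → ℕ) :
    cf (rename σ f) μ = cf f (μ ∘ σ) := by
  unfold cf
  have : Finsupp.equivFunOnFinite.symm μ =
      Finsupp.mapDomain σ (Finsupp.equivFunOnFinite.symm (μ ∘ σ)) := by
    ext j
    rw [← σ.apply_symm_apply j, Finsupp.mapDomain_apply σ.injective]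
    simp
  rw [this, coeff_rename_mapDomain _ σ.injective]

/-- a point of the k-string through μ -/
def st (k : Fin N) (μ : Fin (N+1) → ℕ) (a b : ℕ) : Fin (N+1) → ℕ :=
  Function.update (Function.update μ k.castSucc a) k.succ b

theorem cs_ne (k : Fin N) : k.castSucc ≠ k.succ := ne_of_lt k.castSucc_lt_succ

theorem st_fst (k : Fin N) (μ : Fin (N+1) → ℕ) (a b : ℕ) : st k μ a b k.castSucc = a := by
  simp [st, cs_ne k]
theorem st_snd (k : Fin N) (μ : Fin (N+1) → ℕ) (a b : ℕ) : st k μ a b k.succ = b := by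
  simp [st]
theorem st_oth (k : Fin N) (μ : Fin (N+1) → ℕ) (a b : ℕ) (i : Fin (N+1)) (h1 : i ≠ k.castSucc)
    (h2 : i ≠ k.succ) : st k μ a b i = μ i := by
  simp [st, h1, h2]

theorem st_ext (k : Fin N) (μ ν : Fin (N+1) → ℕ) (a b : ℕ) (h1 : ν k.castSucc = a) (h2 : ν k.succ = b)
    (h3 : ∀ i, i ≠ k.castSucc → i ≠ k.succ → ν i = μ i) : ν = st k μ a b := by
  funext i
  by_cases hi : i = k.castSucc
  · rw [hi, h1, st_fst]
  · by_cases hj : i = k.succ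
    · rw [hj, h2, st_snd]
    · rw [st_oth _ _ _ _ _ hi hj, h3 i hi hj]

theorem st_self (k : Fin N) (μ : Fin (N+1) → ℕ) : μ = st k μ (μ k.castSucc) (μ k.succ) :=
  st_ext _ _ _ _ _ rfl rfl (fun _ _ _ => rfl)

/-- adjacent transposition -/
abbrev sw (k : Fin N) : Equiv.Perm (Fin (N+1)) := Equiv.swap k.castSucc k.succ

theorem sw_fst (k : Fin N) : sw k k.castSucc = k.succ := Equiv.swap_apply_left _ _
theorem sw_snd (k : Fin N) : sw k k.succ = k.castSucc := Equiv.swap_apply_right _ _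
theorem sw_oth (k : Fin N) (i : Fin (N+1)) (h1 : i ≠ k.castSucc) (h2 : i ≠ k.succ) : sw k i = i :=
  Equiv.swap_apply_of_ne_of_ne h1 h2
theorem sw_sw (k : Fin N) (i : Fin (N+1)) : sw k (sw k i) = i := Equiv.swap_apply_self _ _ _

theorem st_sw (k : Fin N) (μ : Fin (N+1) → ℕ) : μ ∘ sw k = st k μ (μ k.succ) (μ k.castSucc) := by
  apply st_ext
  · simp [sw_fst]
  · simp [sw_snd]
  · intro i h1 h2; simp [sw_oth k i h1 h2]

theorem st_comp_sw (k : Fin N) (μ : Fin (N+1) → ℕ) (a b : ℕ) : st k μ a b ∘ sw k = st k μ b a := by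
  apply st_ext
  · simp [sw_fst, st_snd]
  · simp [sw_snd, st_fst]
  · intro i h1 h2; simp [sw_oth k i h1 h2, st_oth k _ _ _ i h1 h2]

theorem cf_sg (k : Fin N) (f : P (N+1)) (μ : Fin (N+1) → ℕ) (a b : ℕ) :
    cf (sg k f) (st k μ a b) = cf f (st k μ b a) := by
  unfold sg
  rw [cf_rename, st_comp_sw]

theorem cf_fst_succ (k : Fin N) (f : P (N+1)) (μ : Fin (N+1) → ℕ) (a b : ℕ) :
    cf (X k.castSucc * f) (st k μ (a+1) b) = cf f (st k μ a b) := by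
  rw [cf_X_mul_pos _ _ _ (by rw [st_fst]; omega)]
  congr 1
  apply st_ext
  · simp [st_fst]
  · rw [Function.update_of_ne (cs_ne k).symm, st_snd]
  · intro i h1 h2; rw [Function.update_of_ne h1, st_oth _ _ _ _ _ h1 h2]

theorem cf_snd_succ (k : Fin N) (f : P (N+1)) (μ : Fin (N+1) → ℕ) (a b : ℕ) :
    cf (X k.succ * f) (st k μ a (b+1)) = cf f (st k μ a b) := by
  rw [cf_X_mul_pos _ _ _ (by rw [st_snd]; omega)]
  congr 1
  apply st_ext
  · rw [Function.update_of_ne (cs_ne k), st_fst]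
  · simp [st_snd]
  · intro i h1 h2; rw [Function.update_of_ne h2, st_oth _ _ _ _ _ h1 h2]

theorem cf_fst_zero (k : Fin N) (f : P (N+1)) (μ : Fin (N+1) → ℕ) (b : ℕ) :
    cf (X k.castSucc * f) (st k μ 0 b) = 0 := cf_X_mul_zero _ _ _ (st_fst _ _ _ _)
theorem cf_snd_zero (k : Fin N) (f : P (N+1)) (μ : Fin (N+1) → ℕ) (a : ℕ) :
    cf (X k.succ * f) (st k μ a 0) = 0 := cf_X_mul_zero _ _ _ (st_snd _ _ _ _)

theorem DL' (hT : IsDL (N+1) t T) (k : Fin N) (f : P (N+1)) (ν : Fin (N+1) → ℕ) :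
    cf (X k.castSucc * T k f) ν - cf (X k.succ * T k f) ν = 
      (1 - t) * cf (X k.succ * f) ν + t * cf (X k.castSucc * sg k f) ν - cf (X k.succ * sg k f) ν := by
  have h := congrArg (fun g => cf g ν) (DL hT k f)
  have e : (X k.castSucc - X k.succ) * T k f = X k.castSucc * T k f - X k.succ * T k f := by ring
  have e2 : (1 - C t) * X k.succ * f + (C t * X k.castSucc - X k.succ) * sg k f =
    C (1 - t) * (X k.succ * f) + C t * (X k.castSucc * sg k f) - X k.succ * sg k f := by
      rw [C_sub, C_1]; ring
  rw [e, e2] at h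
  simp only [cf_sub, cf_add, cf_C_mul] at h
  linear_combination h

theorem cfT_ge (hT : IsDL (N+1) t T) (k : Fin N) (f : P (N+1)) (μ : Fin (N+1) → ℕ) (a b : ℕ) (hab : b ≤ a)
    (h : ∀ a' b', a' + b' = a + b → max a b < max a' b' → cf f (st k μ a' b') = 0) :
    cf (T k f) (st k μ a b) = t * cf f (st k μ b a) := by
  induction b generalizing a with
  | zero =>
    have := DL' hT k f (st k μ (a+1) 0)
    rw [cf_fst_succ, cf_fst_succ, cf_snd_zero, cf_snd_zero, cf_snd_zero, cf_sg] at this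
    linear_combination this
  | succ b ih =>
    have := DL' hT k f (st k μ (a+1) (b+1))
    rw [cf_fst_succ, cf_fst_succ, cf_snd_succ, cf_snd_succ, cf_snd_succ, cf_sg, cf_sg, 
      ih (a+1) (by omega) (fun a' b' h1 h2 => h a' b' (by omega) (by omega)),
      h (a+1) b (by omega) (by omega), h b (a+1) (by omega) (by omega)] at this
    linear_combination this

theorem cfT_lt (hT : IsDL (N+1) t T) (k : Fin N) (f : P (N+1)) (μ : Fin (N+1) → ℕ) (a b : ℕ) (hab : a < b)
    (h : ∀ a' b', a' + b' = a + b → max a b < max a' b' → cf f (st k μ a' b') = 0) :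
    cf (T k f) (st k μ a b) = (t - 1) * cf f (st k μ a b) + cf f (st k μ b a) := by
  induction a generalizing b with
  | zero =>
    have := DL' hT k f (st k μ 0 (b+1))
    rw [cf_snd_succ, cf_snd_succ, cf_snd_succ, cf_fst_zero, cf_fst_zero, cf_sg] at this
    linear_combination -this
  | succ a ih =>
    have := DL' hT k f (st k μ (a+1) (b+1))
    rw [cf_fst_succ, cf_fst_succ, cf_snd_succ, cf_snd_succ, cf_snd_succ, cf_sg, cf_sg, 
      ih (b+1) (by omega) (fun a' b' h1 h2 => h a' b' (by omega) (by omega)),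
      h (b+1) a (by omega) (by omega), h a (b+1) (by omega) (by omega)] at this
    linear_combination -this

/-- supported in a set -/
def Sup {n : ℕ} (S : (Fin n → ℕ) → Prop) (f : P n) : Prop := ∀ μ, cf f μ ≠ 0 → S μ

theorem Sup.zero_of {n : ℕ} {S : (Fin n → ℕ) → Prop} {f : P n} (h : Sup S f) {μ : Fin n → ℕ}
    (hμ : ¬ S μ) : cf f μ = 0 := by
  by_contra h0
  exact hμ (h μ h0)

/-- closed under narrowing k-strings -/
def Narrow (k : Fin N) (S : (Fin (N+1) → ℕ) → Prop) : Prop :=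
  ∀ μ a b a' b', a' + b' = a + b → max a' b' ≤ max a b → S (st k μ a b) → S (st k μ a' b')

theorem Sup.mapT {S : (Fin (N+1) → ℕ) → Prop} {f : P (N+1)} (h : Sup S f) (hT : IsDL (N+1) t T)
    (k : Fin N) (hS : Narrow k S) : Sup S (T k f) := by
  intro μ
  contrapose!
  intro hμ
  rw [st_self k μ] at hμ ⊢
  have key : ∀ a' b', a' + b' = μ k.castSucc + μ k.succ → max (μ k.castSucc) (μ k.succ) ≤ max a' b' →
      cf f (st k μ a' b') = 0 := by
    intro a' b' h1 h2
    apply h.zero_of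
    intro hs
    exact hμ (hS _ _ _ _ _ h1.symm h2 hs)
  rcases le_or_gt (μ k.succ) (μ k.castSucc) with hab | hab
  · rw [cfT_ge hT k f μ _ _ hab (fun a' b' h1 h2 => key a' b' h1 h2.le), key _ _ (by omega) (by omega),
      mul_zero]
  · rw [cfT_lt hT k f μ _ _ hab (fun a' b' h1 h2 => key a' b' h1 h2.le), key _ _ (by omega) (by omega),
      key _ _ (by omega) (by omega), mul_zero, add_zero]

theorem Sup.add {n : ℕ} {S : (Fin n → ℕ) → Prop} {f g : P n} (h : Sup S f) (h' : Sup S g) :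
    Sup S (f + g) := by
  intro μ
  contrapose!
  intro hμ
  rw [cf_add, h.zero_of hμ, h'.zero_of hμ, add_zero]

theorem Sup.smul {n : ℕ} {S : (Fin n → ℕ) → Prop} {f : P n} (h : Sup S f) (c : K) :
    Sup S (c • f) := by
  intro μ
  contrapose!
  intro hμ
  rw [cf_smul, h.zero_of hμ, mul_zero]

theorem Sup.mono {n : ℕ} {S S' : (Fin n → ℕ) → Prop} {f : P n} (h : Sup S f) (hs : ∀ μ, S μ → S' μ) :
    Sup S' f := fun μ hμ => hs μ (h μ hμ)

/-- rotation of tuples: (μ_N, μ_0, …, μ_{N-1}) -/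
def rot (μ : Fin (N+1) → ℕ) : Fin (N+1) → ℕ := Fin.cons (μ (Fin.last N)) (fun k : Fin N => μ k.castSucc)

/-- inverse rotation -/
def tor (μ : Fin (N+1) → ℕ) : Fin (N+1) → ℕ := Fin.snoc (fun k : Fin N => μ k.succ) (μ 0)

theorem rot_tor (μ : Fin (N+1) → ℕ) : rot (tor μ) = μ := by
  funext i
  refine Fin.cases ?_ (fun k => ?_) i <;> simp [rot, tor]

theorem tor_rot (μ : Fin (N+1) → ℕ) : tor (rot μ) = μ := by
  funext i
  refine Fin.lastCases ?_ (fun k => ?_) i <;> simp [rot, tor]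

theorem om_monomial (ν : Fin (N+1) →₀ ℕ) (c : K) : om N (monomial ν c) =
    monomial (Finsupp.equivFunOnFinite.symm (tor ν)) (c * q ^ ν 0) := by
  rw [monomial_eq, monomial_eq, Finsupp.prod_fintype _ _ (by simp), Finsupp.prod_fintype _ _ (by simp),
    map_mul, om_C, map_prod, Fin.prod_univ_succ, Fin.prod_univ_castSucc]
  simp only [map_pow, om_zero, om_succ, Finsupp.coe_equivFunOnFinite_symm, tor, Fin.snoc_castSucc,
    Fin.snoc_last, C_mul, C_pow]
  ring

theorem cf_om (f : P (N+1)) (μ : Fin (N+1) → ℕ) :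
    cf (om N f) μ = q ^ μ (Fin.last N) * cf f (rot μ) := by
  induction f using MvPolynomial.induction_on' with
  | monomial ν c =>
    rw [om_monomial]
    unfold cf
    rw [coeff_monomial, coeff_monomial]
    by_cases h : ν = Finsupp.equivFunOnFinite.symm (rot μ)
    · rw [if_pos h, if_pos]
      · rw [h]; simp [rot, mul_comm]
      · rw [h]; simp [tor_rot]
    · rw [if_neg h, if_neg, mul_zero]
      intro h2
      apply h
      have : tor ν = μ := Finsupp.equivFunOnFinite.symm.injective h2
      rw [← this, rot_tor]
      ext; simp
  | add f g hf hg => rw [map_add, cf_add, cf_add, hf, hg]; ring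

end Stmt19P

open Finset MvPolynomial Stmt19
namespace Stmt19P
set_option linter.unusedSimpArgs false

variable {N : ℕ}

/-- truncated weight -/
def Wt {n : ℕ} (j c : ℕ) (ν : Fin n → ℕ) : ℕ := ∑ i : Fin n, (ν i - (c + if (i:ℕ) < j then 0 else 1))

/-- the support order -/
def Le {n : ℕ} (ν η : Fin n → ℕ) : Prop := ∀ j, j ≤ n → ∀ c, Wt j c ν ≤ Wt j c η

/-- remaining part of the weight, away from k, k+1 -/
def Rt (k : Fin N) (j c : ℕ) (ν : Fin (N+1) → ℕ) : ℕ :=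
  ∑ i ∈ (univ.erase k.castSucc).erase k.succ, (ν i - (c + if (i:ℕ) < j then 0 else 1))

theorem Wt_split (k : Fin N) (j c : ℕ) (ν : Fin (N+1) → ℕ) : Wt j c ν =
    (ν k.castSucc - (c + if (k:ℕ) < j then 0 else 1)) + ((ν k.succ - (c + if (k:ℕ) + 1 < j then 0 else 1)) +
      Rt k j c ν) := by
  unfold Wt Rt
  rw [← add_sum_erase _ _ (mem_univ k.castSucc),
    ← add_sum_erase _ _ (mem_erase.2 ⟨(cs_ne k).symm, mem_univ k.succ⟩)]
  simp

theorem Rt_congr (k : Fin N) (j c : ℕ) (ν μ : Fin (N+1) → ℕ)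
    (h : ∀ i, i ≠ k.castSucc → i ≠ k.succ → ν i = μ i) : Rt k j c ν = Rt k j c μ := by
  unfold Rt
  apply sum_congr rfl
  intro i hi
  simp only [mem_erase, mem_univ, and_true] at hi
  rw [h i hi.2 hi.1]

theorem Rt_st (k : Fin N) (j c : ℕ) (μ : Fin (N+1) → ℕ) (a b : ℕ) :
    Rt k j c (st k μ a b) = Rt k j c μ :=
  Rt_congr _ _ _ _ _ (fun i h1 h2 => st_oth k μ a b i h1 h2)

theorem Rt_j (k : Fin N) (j j' c : ℕ) (μ : Fin (N+1) → ℕ) (h1 : (k:ℕ) ≤ j) (h2 : j ≤ k + 2) 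
    (h1' : (k:ℕ) ≤ j') (h2' : j' ≤ k + 2) : Rt k j c μ = Rt k j' c μ := by
  unfold Rt
  apply sum_congr rfl
  intro i hi
  simp only [mem_erase, mem_univ, and_true] at hi
  have a1 : (i:ℕ) ≠ k := fun h => hi.2 (Fin.ext h)
  have a2 : (i:ℕ) ≠ k + 1 := fun h => hi.1 (Fin.ext h)
  congr 2
  by_cases h : (i:ℕ) < k
  · rw [if_pos (by omega), if_pos (by omega)]
  · rw [if_neg (by omega), if_neg (by omega)]

theorem Le_iff (k : Fin N) (ν θ : Fin (N+1) → ℕ) (h : θ k.succ ≤ θ k.castSucc) :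
    Le ν θ ↔ ∀ j, j ≤ N + 1 → j ≠ k + 1 → ∀ c, Wt j c ν ≤ Wt j c θ := by
  constructor
  · intro h j hj _ c
    exact h j hj c
  · intro h0 j hj c
    by_cases hjk : j = k + 1
    · subst hjk
      have e1 := h0 k (by omega) (by omega) c
      have e2 := h0 (k+2) (by omega) (by omega) c
      rw [Wt_split k, Wt_split k _ _ θ] at e1 e2 ⊢
      rw [Rt_j k k (k+1) c _ (by omega) (by omega) (by omega) (by omega),
        Rt_j k k (k+1) c θ (by omega) (by omega) (by omega) (by omega)] at e1
      rw [Rt_j k (k+2) (k+1) c _ (by omega) (by omega) (by omega) (by omega),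
        Rt_j k (k+2) (k+1) c θ (by omega) (by omega) (by omega) (by omega)] at e2
      rw [if_neg (by omega), if_neg (by omega)] at e1
      rw [if_pos (by omega), if_pos (by omega)] at e2
      rw [if_pos (by omega), if_neg (by omega)]
      omega
    · exact h0 j hj hjk c

theorem Wt_narrow (k : Fin N) (μ : Fin (N+1) → ℕ) (a b a' b' j c : ℕ) (h : a' + b' = a + b)
    (hm : max a' b' ≤ max a b) (hj : j ≠ k + 1) : Wt j c (st k μ a' b') ≤ Wt j c (st k μ a b) := by
  rw [Wt_split k, Wt_split k _ _ (st k μ a b), Rt_st, Rt_st, st_fst, st_snd, st_fst, st_snd]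
  by_cases h1 : (k:ℕ) < j
  · rw [if_pos h1, if_pos (by omega)]; omega
  · rw [if_neg h1, if_neg (by omega)]; omega

theorem Le_narrow (k : Fin N) (θ : Fin (N+1) → ℕ) (h : θ k.succ ≤ θ k.castSucc) :
    Narrow k (fun ν => Le ν θ) := by
  intro μ a b a' b' h1 h2 h3
  simp only [Le_iff k _ θ h] at h3 ⊢
  intro j hj hj' c
  exact (Wt_narrow k μ a b a' b' j c h1 h2 hj').trans (h3 j hj hj' c)

theorem Le_sw (k : Fin N) (ν η : Fin (N+1) → ℕ) (h : η k.castSucc ≤ η k.succ) (hν : Le ν η) :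
    Le ν (η ∘ sw k) := by
  rw [Le_iff k _ _ (by simp only [Function.comp_apply, sw_fst, sw_snd]; exact h)]
  intro j hj hj' c
  refine (hν j hj c).trans ?_
  rw [st_sw]
  conv_lhs => rw [st_self k η]
  exact Wt_narrow k η _ _ _ _ _ _ (by omega) (by omega) hj'

theorem not_Le_wide (k : Fin N) (η : Fin (N+1) → ℕ) (h : η k.castSucc < η k.succ) (a b : ℕ)
    (h2 : η k.succ < max a b) : ¬ Le (st k η a b) η := by
  intro h0
  have := h0 k (by omega) (η k.succ - 1)
  rw [Wt_split k, Wt_split k _ _ η, Rt_st, st_fst, st_snd, if_neg (by omega), if_neg (by omega)] at this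
  omega

theorem not_Le_sw (k : Fin N) (η : Fin (N+1) → ℕ) (h : η k.castSucc < η k.succ) :
    ¬ Le (η ∘ sw k) η := by
  intro h0
  have := h0 (k+1) (by omega) (η k.succ - 1)
  rw [st_sw, Wt_split k, Wt_split k _ _ η, Rt_st, st_fst, st_snd, if_pos (by omega), if_neg (by omega)] at this
  omega

/-- the raising map on compositions -/
def Ph (η : Fin (N+1) → ℕ) : Fin (N+1) → ℕ := Fin.snoc (fun k : Fin N => η k.succ) (η 0 + 1)

theorem Ph_cast (η : Fin (N+1) → ℕ) (k : Fin N) : Ph η k.castSucc = η k.succ := by simp [Ph]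
theorem Ph_last (η : Fin (N+1) → ℕ) : Ph η (Fin.last N) = η 0 + 1 := by simp [Ph]

theorem Wt_Ph (η : Fin (N+1) → ℕ) (j c : ℕ) (hj : j ≤ N) : Wt j c (Ph η) = Wt (j+1) c η := by
  unfold Wt
  rw [Fin.sum_univ_castSucc, Fin.sum_univ_succ, add_comm]
  congr 1
  · rw [Ph_last, Fin.val_last, if_neg (by omega), Fin.val_zero, if_pos (by omega)]; omega
  · apply sum_congr rfl
    intro i _
    rw [Ph_cast]
    congr 2
    simp

theorem Wt_Ph_zero (η : Fin (N+1) → ℕ) : Wt (N+1) 0 (Ph η) = Wt (N+1) 0 η + 1 := by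
  unfold Wt
  rw [Fin.sum_univ_castSucc, Fin.sum_univ_succ]
  simp only [Fin.val_castSucc, Fin.val_last, Fin.val_zero, Fin.val_succ, Ph_cast, Ph_last]
  have : ∀ x : Fin N, (if (x:ℕ) < N + 1 then 0 else 1) = if (x:ℕ) + 1 < N + 1 then 0 else 1 := by
    intro x; rw [if_pos (by omega), if_pos (by omega)]
  simp only [this]
  simp
  omega

theorem Wt_Ph_succ (η : Fin (N+1) → ℕ) (c : ℕ) : Wt (N+1) (c+1) (Ph η) = Wt 1 c η := by
  unfold Wt
  rw [Fin.sum_univ_castSucc, Fin.sum_univ_succ, add_comm]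
  congr 1
  · rw [Ph_last, Fin.val_last, if_pos (by omega), Fin.val_zero, if_pos (by omega)]; omega
  · apply sum_congr rfl
    intro i _
    rw [Ph_cast, if_pos (by simp), if_neg (by simp)]

theorem Le_Ph (ν η : Fin (N+1) → ℕ) (h : Le ν η) : Le (Ph ν) (Ph η) := by
  intro j hj c
  by_cases hj' : j ≤ N
  · rw [Wt_Ph _ _ _ hj', Wt_Ph _ _ _ hj']
    exact h (j+1) (by omega) c
  · have : j = N + 1 := by omega
    subst this
    cases c with
    | zero => rw [Wt_Ph_zero, Wt_Ph_zero]; have := h (N+1) le_rfl 0; omega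
    | succ c => rw [Wt_Ph_succ, Wt_Ph_succ]; exact h 1 (by omega) c

/-- rank relation -/
def rl {n : ℕ} (η : Fin n → ℕ) (i l : Fin n) : Prop := η i < η l ∨ (η i = η l ∧ l < i)

instance {n : ℕ} (η : Fin n → ℕ) (i l : Fin n) : Decidable (rl η i l) := by unfold rl; infer_instance

theorem legCo_eq {n : ℕ} (η : Fin n → ℕ) (i : Fin n) : legCo n η i = (univ.filter fun l => rl η i l).card := by
  unfold legCo
  rw [← card_union_of_disjoint]
  · congr 1
    ext l
    simp only [mem_union, mem_filter, mem_univ, true_and]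
    unfold rl
    have hli : l = i → η l = η i := fun h => by rw [h]
    simp only [Fin.ext_iff, Fin.lt_def] at *
    constructor
    · rintro (h | h) <;> omega
    · rintro (h | h)
      · rcases lt_trichotomy (l:ℕ) i with h1 | h1 | h1
        · left; omega
        · have := hli h1; omega
        · right; omega
      · left; omega
  · rw [disjoint_left]
    intro l
    simp only [mem_filter, mem_univ, true_and]
    omega

theorem legCo_lt {n : ℕ} (η : Fin n → ℕ) (i l : Fin n) (h : rl η i l) : legCo n η l < legCo n η i := by
  rw [legCo_eq, legCo_eq]
  apply card_lt_card
  rw [ssubset_iff_of_subset]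
  · exact ⟨l, mem_filter.2 ⟨mem_univ _, h⟩, fun h0 => by
      have := (mem_filter.1 h0).2
      unfold rl at this
      simp at this⟩
  · intro m
    simp only [mem_filter, mem_univ, true_and]
    unfold rl at *
    omega

theorem rl_iff {n : ℕ} (η : Fin n → ℕ) (i l : Fin n) : rl η i l ↔ legCo n η l < legCo n η i := by
  constructor
  · exact legCo_lt η i l
  · intro h
    by_contra h0
    by_cases h1 : i = l
    · subst h1; omega
    · have : rl η l i := by unfold rl at *; omega
      have := legCo_lt η l i this
      omega

theorem legCo_le (η : Fin (N+1) → ℕ) (i : Fin (N+1)) : legCo (N+1) η i ≤ N := by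
  rw [legCo_eq]
  have : (univ.filter fun l => rl η i l) ⊆ univ.erase i := by
    intro l
    simp only [mem_filter, mem_univ, true_and, mem_erase, and_true]
    unfold rl
    intro h h2
    subst h2; simp at h
  have := card_le_card this
  simpa using this

theorem rl_sw (k : Fin N) (η : Fin (N+1) → ℕ) (h : η k.castSucc ≠ η k.succ) (i l : Fin (N+1)) :
    rl (η ∘ sw k) i l ↔ rl η (sw k i) (sw k l) := by
  unfold rl
  simp only [Function.comp_apply]
  by_cases hi1 : i = k.castSucc <;> by_cases hi2 : i = k.succ <;> by_cases hl1 : l = k.castSucc <;>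
    by_cases hl2 : l = k.succ <;> simp_all [sw_fst, sw_snd, sw_oth, cs_ne]
  all_goals (simp only [Fin.lt_def, Fin.ext_iff, Fin.val_castSucc, Fin.val_succ] at *; try omega)

theorem legCo_sw (k : Fin N) (η : Fin (N+1) → ℕ) (h : η k.castSucc ≠ η k.succ) (i : Fin (N+1)) :
    legCo (N+1) (η ∘ sw k) i = legCo (N+1) η (sw k i) := by
  rw [legCo_eq, legCo_eq]
  apply card_bij (fun l _ => sw k l)
  · intro l hl
    simp only [mem_filter, mem_univ, true_and] at hl ⊢
    exact (rl_sw k η h i l).1 hl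
  · intro a _ b _ hab
    exact (sw k).injective hab
  · intro b hb
    refine ⟨sw k b, ?_, sw_sw k b⟩
    simp only [mem_filter, mem_univ, true_and] at hb ⊢
    rw [rl_sw k η h, sw_sw]
    exact hb

/-- index rotation i ↦ i+1 mod n -/
def ro (N : ℕ) : Equiv.Perm (Fin (N+1)) := finRotate (N+1)

theorem ro_cast (k : Fin N) : ro N k.castSucc = k.succ := by
  simp [ro, finRotate_apply]
theorem ro_last : ro N (Fin.last N) = 0 := by
  simp [ro]

theorem rl_Ph (η : Fin (N+1) → ℕ) (i l : Fin (N+1)) : rl (Ph η) i l ↔ rl η (ro N i) (ro N l) := by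
  unfold rl
  refine Fin.lastCases ?_ (fun i' => ?_) i <;> refine Fin.lastCases ?_ (fun l' => ?_) l <;>
    simp only [ro_last, ro_cast, Ph_cast, Ph_last, Fin.lt_def, Fin.val_castSucc, Fin.val_succ, Fin.val_last, Fin.val_zero] <;> omega

theorem legCo_Ph (η : Fin (N+1) → ℕ) (i : Fin (N+1)) :
    legCo (N+1) (Ph η) i = legCo (N+1) η (ro N i) := by
  rw [legCo_eq, legCo_eq]
  apply card_bij (fun l _ => ro N l)
  · intro l hl
    simp only [mem_filter, mem_univ, true_and] at hl ⊢
    exact (rl_Ph η i l).1 hl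
  · intro a _ b _ hab
    exact (ro N).injective hab
  · intro b hb
    refine ⟨(ro N).symm b, ?_, by simp⟩
    simp only [mem_filter, mem_univ, true_and] at hb ⊢
    rw [rl_Ph, Equiv.apply_symm_apply]
    exact hb

/-- number of ascents pairs i<j, η_i<η_j -/
def iv {n : ℕ} (η : Fin n → ℕ) : ℕ := ∑ p : Fin n × Fin n, if p.1 < p.2 ∧ η p.1 < η p.2 then 1 else 0

theorem sw_lt (k : Fin N) (i l : Fin (N+1)) (h1 : ¬ (i = k.castSucc ∧ l = k.succ))
    (h2 : ¬ (i = k.succ ∧ l = k.castSucc)) : sw k i < sw k l ↔ i < l := by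
  by_cases hi1 : i = k.castSucc <;> by_cases hi2 : i = k.succ <;> by_cases hl1 : l = k.castSucc <;>
    by_cases hl2 : l = k.succ <;> simp_all [sw_fst, sw_snd, sw_oth, cs_ne]
  all_goals (simp only [Fin.lt_def, Fin.ext_iff, Fin.val_castSucc, Fin.val_succ] at *; try omega)

theorem iv_sw (k : Fin N) (η : Fin (N+1) → ℕ) (h : η k.castSucc < η k.succ) :
    iv η = iv (η ∘ sw k) + 1 := by
  unfold iv
  rw [← Equiv.sum_comp (Equiv.prodCongr (sw k) (sw k))
    (fun p : Fin (N+1) × Fin (N+1) => if p.1 < p.2 ∧ (η ∘ sw k) p.1 < (η ∘ sw k) p.2 then 1 else 0)]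
  have e : (1:ℕ) = ∑ p : Fin (N+1) × Fin (N+1), if p = (k.castSucc, k.succ) then 1 else 0 := by simp
  conv_rhs => rw [show ∀ a : ℕ, a + 1 = a + ∑ p : Fin (N+1) × Fin (N+1), (if p = (k.castSucc, k.succ) then 1 else 0) from fun a => by rw [← e]]
  rw [← sum_add_distrib]
  apply sum_congr rfl
  rintro ⟨i, l⟩ _
  simp only [Equiv.prodCongr_apply, Prod.map_apply, Function.comp_apply, sw_sw, Prod.mk.injEq]
  by_cases h1 : i = k.castSucc ∧ l = k.succ
  · obtain ⟨rfl, rfl⟩ := h1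
    have : ¬ (k.succ < k.castSucc) := by simp [Fin.lt_def]
    simp [sw_fst, sw_snd, h, this, Fin.lt_def]
  · by_cases h2 : i = k.succ ∧ l = k.castSucc
    · obtain ⟨rfl, rfl⟩ := h2
      have e1 : ¬ (k.succ < k.castSucc) := by simp [Fin.lt_def]
      simp [e1, (cs_ne k), (cs_ne k).symm, h.le, Nat.not_lt.2 h.le]
    · simp only [sw_lt k i l h1 h2, h1, if_false, add_zero]

theorem iv_cast (η : Fin (N+1) → ℕ) : iv η = ∑ i : Fin N, (if η i.castSucc < η (Fin.last N) then 1 else 0) +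
    iv (fun i : Fin N => η i.castSucc) := by
  unfold iv
  rw [Fintype.sum_prod_type, Fintype.sum_prod_type, Fin.sum_univ_castSucc]
  simp only [Fin.sum_univ_castSucc]
  have e1 : ∀ x : Fin (N+1), ¬ (Fin.last N < x) := fun x => by simp [Fin.lt_def]; omega
  have e2 : ∀ x : Fin N, x.castSucc < Fin.last N := fun x => by simp [Fin.lt_def]
  simp only [e1, e2, false_and, if_false, sum_const_zero, add_zero, true_and, Fin.castSucc_lt_castSucc_iff]
  rw [sum_add_distrib, add_comm]

theorem iv_succ (η : Fin (N+1) → ℕ) : iv η = ∑ i : Fin N, (if η 0 < η i.succ then 1 else 0) +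
    iv (fun i : Fin N => η i.succ) := by
  unfold iv
  rw [Fintype.sum_prod_type, Fintype.sum_prod_type, Fin.sum_univ_succ]
  simp only [Fin.sum_univ_succ]
  have e1 : ∀ x : Fin (N+1), ¬ (x < 0) := fun x => by simp
  have e2 : ∀ x : Fin N, (0 : Fin (N+1)) < x.succ := fun x => by simp
  simp only [e1, e2, false_and, if_false, sum_const_zero, zero_add, true_and, Fin.succ_lt_succ_iff]

theorem legCo_zero' (η : Fin (N+1) → ℕ) : legCo (N+1) η 0 = ∑ i : Fin N, (if η 0 < η i.succ then 1 else 0) := by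
  rw [legCo_eq, card_filter, Fin.sum_univ_succ]
  simp [rl]

theorem iv_Ph (η : Fin (N+1) → ℕ) : iv (Ph η) + 2 * legCo (N+1) η 0 = iv η + N := by
  rw [iv_cast, iv_succ η, legCo_zero']
  simp only [Ph_cast, Ph_last]
  have : ∑ i : Fin N, (if η i.succ < η 0 + 1 then 1 else 0) + ∑ i : Fin N, (if η 0 < η i.succ then 1 else 0) = N := by
    rw [← sum_add_distrib]
    have : ∀ i : Fin N, ((if η i.succ < η 0 + 1 then 1 else 0) + (if η 0 < η i.succ then 1 else 0) : ℕ) = 1 := by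
      intro i; split_ifs <;> omega
    rw [sum_congr rfl (fun i _ => this i)]
    simp
  omega

end Stmt19P

open Finset MvPolynomial Stmt19
namespace Stmt19P
set_option linter.unusedSimpArgs false

variable {N : ℕ}

/-- F(k,s) -/
noncomputable def Ff (k s : ℕ) : K := (1 - q ^ k * t ^ (s+1)) / (1 - q ^ k * t ^ s)

/-- B(d,s) -/
noncomputable def Bf (d s : ℕ) : K := ∏ k ∈ range d, Ff (k+1) s

/-- pair factor -/
noncomputable def Gf {n : ℕ} (η : Fin n → ℕ) (i j : Fin n) : K :=
  if rl η j i then Bf (η i - η j - (if j < i then 1 else 0)) (legCo n η j - legCo n η i) else 1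

/-- the pair product -/
noncomputable def Vp {n : ℕ} (η : Fin n → ℕ) : K := ∏ p : Fin n × Fin n, Gf η p.1 p.2

/-- the value -/
noncomputable def Vv {n : ℕ} (η : Fin n → ℕ) : K :=
  t ^ (iv η + ∑ i, legCo n η i * η i) * Vp η

theorem Vp_Ph (η : Fin (N+1) → ℕ) : Vp (Ph η) = Vp η := by
  unfold Vp
  rw [← Equiv.prod_comp (Equiv.prodCongr (ro N) (ro N)) (fun p => Gf η p.1 p.2)]
  apply prod_congr rfl
  rintro ⟨i, j⟩ _
  simp only [Equiv.prodCongr_apply, Prod.map_apply]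
  unfold Gf
  simp only [rl_Ph, legCo_Ph]
  by_cases h : rl η (ro N j) (ro N i)
  · rw [if_pos h, if_pos h]
    congr 1
    refine Fin.lastCases ?_ (fun i' => ?_) i <;> refine Fin.lastCases ?_ (fun j' => ?_) j <;>
      simp only [ro_last, ro_cast, Ph_cast, Ph_last, Fin.lt_def, Fin.val_castSucc, Fin.val_succ, Fin.val_last, Fin.val_zero] <;>
      split_ifs <;> omega
  · rw [if_neg h, if_neg h]

theorem Vv_Ph (η : Fin (N+1) → ℕ) : Vv (Ph η) = t ^ (N - legCo (N+1) η 0) * Vv η := by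
  unfold Vv
  rw [Vp_Ph, ← mul_assoc, ← pow_add]
  congr 2
  have e1 : ∑ i, legCo (N+1) (Ph η) i * Ph η i = ∑ i, legCo (N+1) η i * η i + legCo (N+1) η 0 := by
    rw [Fin.sum_univ_castSucc, Fin.sum_univ_succ]
    simp only [legCo_Ph, ro_cast, ro_last, Ph_cast, Ph_last]
    ring
  have e2 := iv_Ph η
  have e3 := legCo_le η 0
  omega

theorem Vp_sw (k : Fin N) (η : Fin (N+1) → ℕ) (h : η k.castSucc < η k.succ) :
    Vp (η ∘ sw k) = Vp η * Ff (η k.succ - η k.castSucc)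
      (legCo (N+1) η k.castSucc - legCo (N+1) η k.succ) := by
  unfold Vp
  rw [← Equiv.prod_comp (Equiv.prodCongr (sw k) (sw k)) (fun p => Gf η p.1 p.2)]
  have e : Ff (η k.succ - η k.castSucc) (legCo (N+1) η k.castSucc - legCo (N+1) η k.succ) = 
    ∏ p : Fin (N+1) × Fin (N+1), if p = (k.castSucc, k.succ) then 
      Ff (η k.succ - η k.castSucc) (legCo (N+1) η k.castSucc - legCo (N+1) η k.succ) else 1 := by simp
  rw [e, ← prod_mul_distrib]
  apply prod_congr rfl
  rintro ⟨i, j⟩ _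
  simp only [Equiv.prodCongr_apply, Prod.map_apply, Prod.mk.injEq]
  unfold Gf
  simp only [rl_sw k η h.ne, legCo_sw k η h.ne, Function.comp_apply]
  by_cases h1 : i = k.castSucc ∧ j = k.succ
  · obtain ⟨rfl, rfl⟩ := h1
    have a1 : rl η k.castSucc k.succ := Or.inl h
    have a2 : ¬ (k.succ < k.castSucc) := by simp [Fin.lt_def]
    have a3 : k.castSucc < k.succ := by simp [Fin.lt_def]
    simp only [sw_fst, sw_snd, a1, a2, a3, if_true, if_false, and_self]
    obtain ⟨d, hd⟩ : ∃ d, η k.succ - η k.castSucc = d + 1 := ⟨η k.succ - η k.castSucc - 1, by omega⟩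
    rw [hd, Nat.sub_zero, Nat.add_sub_cancel]
    unfold Bf
    rw [prod_range_succ]
  · rw [if_neg h1, mul_one]
    by_cases h2 : i = k.succ ∧ j = k.castSucc
    · obtain ⟨rfl, rfl⟩ := h2
      have a1 : ¬ rl η k.succ k.castSucc := by unfold rl; omega
      simp only [sw_fst, sw_snd, a1, if_false]
    · have := sw_lt k j i (by tauto) (by tauto)
      simp only [this]

theorem Vv_sw (k : Fin N) (η : Fin (N+1) → ℕ) (h : η k.castSucc < η k.succ) :
    t * Vv (η ∘ sw k) = Ff (η k.succ - η k.castSucc)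
      (legCo (N+1) η k.castSucc - legCo (N+1) η k.succ) * Vv η := by
  unfold Vv
  rw [Vp_sw k η h, iv_sw k η h]
  have : ∑ i, legCo (N+1) (η ∘ sw k) i * (η ∘ sw k) i = ∑ i, legCo (N+1) η i * η i := by
    rw [← Equiv.sum_comp (sw k) (fun i => legCo (N+1) η i * η i)]
    simp only [legCo_sw k η h.ne, Function.comp_apply]
  rw [this]
  ring

theorem Vv_zero : Vv (fun _ : Fin (N+1) => 0) = 1 := by
  unfold Vv Vp Gf iv Bf
  simp

variable {T : ℕ → P (N+1) →ₗ[K] P (N+1)}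

/-- a nonsymmetric Macdonald polynomial with its value -/
structure Good (T : ℕ → P (N+1) →ₗ[K] P (N+1)) (η : Fin (N+1) → ℕ) (E : P (N+1)) : Prop where
  eig : ∀ i : Fin (N+1), Yop (N+1) q t T i E = (q ^ η i / t ^ legCo (N+1) η i) • E
  sup : Sup (fun ν => Le ν η) E
  one : cf E η = 1
  val : ev N E = Vv η

theorem T_one (hT : IsDL (N+1) t T) (k : ℕ) (hk : k < N) : T k 1 = t • 1 := by
  have : T (⟨k, hk⟩ : Fin N) 1 = t • 1 := by
    apply DLu hT
    rw [smul_eq_C_mul, map_one]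
    ring
  exact this

theorem Ti_one (hT : IsDL (N+1) t T) (k : ℕ) (hk : k < N) : Tinv (N+1) t T k 1 = t⁻¹ • 1 := by
  rw [Tinv_apply, T_one hT k hk]
  simp only [smul_eq_C_mul]
  have h := Ct_mul (N := N)
  linear_combination h

theorem Cp_one (S : ℕ → Module.End K (P (N+1))) (c : K) (j m : ℕ) (h : j + m ≤ N) (hS : ∀ k, k < N → S k 1 = c • 1) :
    Cp S j m 1 = c ^ m • 1 := by
  induction m generalizing j with
  | zero => simp [Cp]
  | succ m ih =>
    rw [Cp, Module.End.mul_apply, ih (j+1) (by omega), map_smul, hS j (by omega), smul_smul, pow_succ]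

theorem Y_one (hT : IsDL (N+1) t T) (i : Fin (N+1)) : Yop (N+1) q t T i 1 = (t ^ (i:ℕ))⁻¹ • 1 := by
  rw [Yop_eq, Ya]
  simp only [LinearMap.smul_apply, Module.End.mul_apply]
  rw [Cp_one _ t⁻¹ 0 i (by omega) (Ti_one hT), map_smul, omegaOp_eq, AlgHom.toLinearMap_apply, map_one, map_smul,
    Cp_one _ t i _ (by omega) (T_one hT), smul_smul, smul_smul]
  congr 1
  have := t_ne
  rw [inv_pow]
  field_simp

theorem good_zero (hT : IsDL (N+1) t T) : Good T (fun _ => 0) 1 where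
  eig := by
    intro i
    rw [Y_one hT, legCo_eq]
    have : (univ.filter fun l => rl (fun _ => 0) i l).card = (i:ℕ) := by
      rw [show (univ.filter fun l => rl (fun _ => 0) i l) = Finset.Iio i by
        ext l; rw [mem_filter, Finset.mem_Iio]; unfold rl; simp]
      simp
    rw [this]; simp
  sup := by
    intro μ hμ
    unfold cf at hμ
    rw [coeff_one] at hμ
    have : Finsupp.equivFunOnFinite.symm μ = 0 := by
      by_contra h; rw [if_neg (Ne.symm h)] at hμ; exact hμ rfl
    have : μ = fun _ => 0 := by
      funext i
      have := DFunLike.congr_fun this i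
      simpa using this
    rw [this]
    intro j _ c
    exact le_rfl
  one := by
    unfold cf
    rw [coeff_one, if_pos]
    ext i; simp
  val := by rw [map_one, Vv_zero]

theorem rot_Ph (η : Fin (N+1) → ℕ) :
    rot (Function.update (Ph η) (Fin.last N) (Ph η (Fin.last N) - 1)) = η := by
  funext i
  refine Fin.cases ?_ (fun k => ?_) i
  · simp [rot, Ph_last]
  · simp [rot, Ph_cast, Function.update_of_ne, Fin.castSucc_ne_last]

theorem Ph_rot (μ : Fin (N+1) → ℕ) (h : 0 < μ (Fin.last N)) :
    Ph (rot (Function.update μ (Fin.last N) (μ (Fin.last N) - 1))) = μ := by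
  funext i
  refine Fin.lastCases ?_ (fun k => ?_) i
  · rw [Ph_last]; simp [rot]; omega
  · rw [Ph_cast]; simp [rot, Function.update_of_ne, Fin.castSucc_ne_last]

theorem good_Ph (hT : IsDL (N+1) t T) (η : Fin (N+1) → ℕ) (E : P (N+1)) (hE : Good T η E) :
    Good T (Ph η) ((q ^ η 0)⁻¹ • (X (Fin.last N) * om N E)) := by
  have hw : ∀ f, (MX N N * omegaOp (N+1) q) f = X (Fin.last N) * om N f := by
    intro f
    rw [Module.End.mul_apply, omegaOp_eq, MX_lt N (by omega)]; rfl
  have h := hk hT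
  have hq : q ^ η 0 ≠ 0 := pow_ne_zero _ q_ne
  refine ⟨?_, ?_, ?_, ?_⟩
  · intro i
    rw [map_smul, smul_comm]
    congr 1
    rw [legCo_Ph]
    refine Fin.lastCases ?_ (fun k => ?_) i
    · have e := LinearMap.congr_fun h.PhiYN E
      have e0 := hE.eig 0
      rw [Yop_eq] at e0
      rw [Module.End.mul_apply, hw, LinearMap.smul_apply, Module.End.mul_apply] at e
      rw [Fin.val_zero] at e0
      rw [Yop_eq, Fin.val_last, e, e0, map_smul, hw, smul_smul, ro_last, Ph_last]
      congr 1
      ring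
    · have e := LinearMap.congr_fun (h.PhiY k k.2) E
      have e0 := hE.eig k.succ
      rw [Yop_eq] at e0
      rw [Module.End.mul_apply, hw, Module.End.mul_apply] at e
      rw [Fin.val_succ] at e0
      rw [Yop_eq, Fin.val_castSucc, e, e0, map_smul, hw, ro_cast, Ph_cast]
  · intro μ hμ
    rw [cf_smul] at hμ
    have hμ := right_ne_zero_of_mul hμ
    have hpos : 0 < μ (Fin.last N) := by
      by_contra h0
      exact hμ (cf_X_mul_zero _ _ _ (by omega))
    rw [cf_X_mul_pos _ _ _ hpos, cf_om] at hμ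
    have := hE.sup _ (right_ne_zero_of_mul hμ)
    have := Le_Ph _ _ this
    rwa [Ph_rot μ hpos] at this
  · rw [cf_smul, cf_X_mul_pos _ _ _ (by rw [Ph_last]; omega), cf_om, rot_Ph, hE.one, Ph_last]
    simp [hq]
  · have e1 : ev N (om N E) = q ^ η 0 / t ^ legCo (N+1) η 0 * Vv η := by
      have := ev_om hT E
      rw [hE.eig 0, omegaOp_eq, AlgHom.toLinearMap_apply, map_smul, hE.val, smul_eq_mul] at this
      exact this
    rw [map_smul, map_mul, ev_X, e1, Vv_Ph, smul_eq_mul, Fin.val_last]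
    have e3 := legCo_le η 0
    rw [pow_sub₀ _ t_ne e3]
    have := t_ne
    field_simp

theorem good_sw (hT : IsDL (N+1) t T) (k : Fin N) (η : Fin (N+1) → ℕ) (hlt : η k.castSucc < η k.succ)
    (E : P (N+1)) (hE : Good T η E) : ∃ E', Good T (η ∘ sw k) E' := by
  have h := hk hT
  have hr : legCo (N+1) η k.succ < legCo (N+1) η k.castSucc := legCo_lt η _ _ (Or.inl hlt)
  obtain ⟨d, hd⟩ : ∃ d, η k.succ = η k.castSucc + d := ⟨η k.succ - η k.castSucc, by omega⟩
  obtain ⟨s, hs⟩ : ∃ s, legCo (N+1) η k.castSucc = legCo (N+1) η k.succ + s :=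
    ⟨legCo (N+1) η k.castSucc - legCo (N+1) η k.succ, by omega⟩
  have hz := qt_ne d s (by omega)
  have ht := t_ne
  obtain ⟨y0, hy0⟩ : ∃ y, y = q ^ η k.castSucc / t ^ legCo (N+1) η k.castSucc := ⟨_, rfl⟩
  obtain ⟨y1, hy1⟩ : ∃ y, y = q ^ η k.succ / t ^ legCo (N+1) η k.succ := ⟨_, rfl⟩
  set z : K := q ^ d * t ^ s with hzdef
  set a : K := (1 - t) / (1 - z) with ha
  have hy : y1 = z * y0 := by
    rw [hy1, hy0, hzdef, hd, hs, pow_add, pow_add]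
    field_simp
  have hay : a * (y0 - y1) = (1 - t) * y0 := by
    rw [hy, ha]; field_simp
  have e0 := hE.eig k.castSucc
  have e1 := hE.eig k.succ
  rw [Yop_eq, Fin.val_castSucc, ← hy0] at e0
  rw [Yop_eq, Fin.val_succ, ← hy1] at e1
  have i1 := LinearMap.congr_fun (h.Yint k k.2) E
  have i2 := LinearMap.congr_fun (h.Yint2 k k.2) E
  simp only [Module.End.mul_apply, LinearMap.add_apply, LinearMap.smul_apply, Module.End.one_apply, e0, e1,
    map_smul, map_add] at i1 i2
  have hayC : (C a : P (N+1)) * (C y0 - C y1) = (1 - C t) * C y0 := by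
    rw [← C_sub, ← C_mul, hay, C_mul, C_sub, C_1]
  simp only [smul_eq_C_mul, C_sub, C_1] at i1 i2
  refine ⟨t⁻¹ • (T k E + a • E), ?_, ?_, ?_, ?_⟩
  · intro i
    rw [map_smul, smul_comm, map_add, map_smul, legCo_sw k η hlt.ne, Function.comp_apply]
    congr 1
    by_cases h1 : i = k.castSucc
    · subst h1
      rw [sw_fst, ← hy1, Yop_eq, Fin.val_castSucc, e0]
      simp only [smul_eq_C_mul]
      linear_combination -i2 + E * hayC
    · by_cases h2 : i = k.succ
      · subst h2
        rw [sw_snd, ← hy0, Yop_eq, Fin.val_succ, e1]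
        simp only [smul_eq_C_mul]
        linear_combination i1 - E * hayC
      · have c1 := LinearMap.congr_fun (h.TY k i k.2 (by omega) (fun h0 => h1 (Fin.ext h0)) (fun h0 => h2 (Fin.ext h0))) E
        have c2 := hE.eig i
        rw [Yop_eq] at c2
        rw [Module.End.mul_apply, Module.End.mul_apply, c2, map_smul] at c1
        rw [sw_oth k i h1 h2, Yop_eq, c2, ← c1]
        simp only [smul_eq_C_mul]
        ring
  · apply Sup.smul
    have hs' : Sup (fun ν => Le ν (η ∘ sw k)) E := hE.sup.mono (fun ν hν => Le_sw k ν η hlt.le hν)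
    apply Sup.add
    · apply hs'.mapT hT
      apply Le_narrow
      simp only [Function.comp_apply, sw_fst, sw_snd]; exact hlt.le
    · exact hs'.smul _
  · have z1 : cf E (η ∘ sw k) = 0 := hE.sup.zero_of (not_Le_sw k η hlt)
    have z2 : cf (T k E) (η ∘ sw k) = t := by
      rw [st_sw, cfT_ge hT k E η _ _ hlt.le, ← st_self, hE.one, mul_one]
      intro a' b' _ h2
      apply hE.sup.zero_of
      exact not_Le_wide k η hlt a' b' (by omega)
    rw [cf_smul, cf_add, cf_smul, z1, z2, mul_zero, add_zero, inv_mul_cancel₀ ht]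
  · have hv := Vv_sw k η hlt
    rw [hd, hs, Nat.add_sub_cancel_left, Nat.add_sub_cancel_left] at hv
    apply mul_left_cancel₀ ht
    rw [hv, map_smul, map_add, map_smul, ev_T hT, hE.val, smul_eq_mul, smul_eq_mul, mul_inv_cancel_left₀ ht, ← add_mul]
    congr 1
    rw [ha, Ff, pow_succ, ← mul_assoc, ← hzdef]
    field_simp
    ring

theorem good_ex (hT : IsDL (N+1) t T) (η : Fin (N+1) → ℕ) : ∃ E, Good T η E := by
  obtain ⟨d, hd⟩ : ∃ d, ∑ i, η i = d := ⟨_, rfl⟩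
  induction d using Nat.strong_induction_on generalizing η with
  | _ d ihd =>
    obtain ⟨m, hm⟩ : ∃ m, ∑ i : Fin (N+1), (N - (i:ℕ)) * η i = m := ⟨_, rfl⟩
    induction m using Nat.strong_induction_on generalizing η with
    | _ m ihm =>
      by_cases hl : 0 < η (Fin.last N)
      · have e := Ph_rot η hl
        set ν := rot (Function.update η (Fin.last N) (η (Fin.last N) - 1)) with hν
        have hs : ∑ i, η i = ∑ i, ν i + 1 := by
          rw [← e, Fin.sum_univ_castSucc, Fin.sum_univ_succ]
          simp only [Ph_cast, Ph_last]
          ring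
        obtain ⟨E, hE⟩ := ihd (∑ i, ν i) (by omega) ν rfl
        rw [← e]
        exact ⟨_, good_Ph hT ν E hE⟩
      · by_cases hmono : ∀ k : Fin N, η k.castSucc ≤ η k.succ
        · have hm := Fin.monotone_iff_le_succ.2 hmono
          have : η = fun _ => 0 := by
            funext i
            have := hm (Fin.le_last i)
            omega
          rw [this]
          exact ⟨_, good_zero hT⟩
        · push Not at hmono
          obtain ⟨k, hk⟩ := hmono
          have hs : ∑ i, (η ∘ sw k) i = d := by
            rw [← hd]; exact Equiv.sum_comp (sw k) η
          have hlt : ∑ i : Fin (N+1), (N - (i:ℕ)) * (η ∘ sw k) i < m := by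
            rw [← hm, ← add_sum_erase _ _ (mem_univ k.castSucc),
              ← add_sum_erase _ _ (mem_erase.2 ⟨(cs_ne k).symm, mem_univ k.succ⟩),
              ← add_sum_erase univ (fun i : Fin (N+1) => (N - (i:ℕ)) * η i) (mem_univ k.castSucc),
              ← add_sum_erase _ (fun i : Fin (N+1) => (N - (i:ℕ)) * η i) (mem_erase.2 ⟨(cs_ne k).symm, mem_univ k.succ⟩)]
            have e : ∑ i ∈ (univ.erase k.castSucc).erase k.succ, (N - (i:ℕ)) * (η ∘ sw k) i = 
              ∑ i ∈ (univ.erase k.castSucc).erase k.succ, (N - (i:ℕ)) * η i := by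
              apply sum_congr rfl
              intro i hi
              simp only [mem_erase, mem_univ, and_true] at hi
              rw [Function.comp_apply, sw_oth k i hi.2 hi.1]
            rw [e]
            simp only [Function.comp_apply, sw_fst, sw_snd, Fin.val_castSucc, Fin.val_succ]
            obtain ⟨x, hx⟩ : ∃ x, N - (k:ℕ) = x + 1 := ⟨N - k - 1, by omega⟩
            have hx' : N - ((k:ℕ) + 1) = x := by omega
            rw [hx, hx']
            ring_nf
            omega
          obtain ⟨E, hE⟩ := ihm _ hlt (η ∘ sw k) hs rfl
          have := good_sw hT k (η ∘ sw k) (by simp only [Function.comp_apply, sw_fst, sw_snd]; exact hk) E hE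
          have e : (η ∘ sw k) ∘ sw k = η := by funext i; simp [sw_sw]
          rwa [e] at this

end Stmt19P

open Finset MvPolynomial Stmt19
namespace Stmt19P
set_option linter.unusedSimpArgs false

section abstr
variable {F : Type*} [Field F] {R : Type*} [Ring R] [Algebra F R]

/-- sum of the coset representatives -/
def Am (S : ℕ → R) (m : ℕ) : R := ∑ j ∈ range (m+2), Cp S j (m+1-j)

/-- the symmetrizer -/
def Um (S : ℕ → R) : ℕ → R
  | 0 => 1
  | m + 1 => Am S m * Um S m

theorem Um_T {N : ℕ} {S : ℕ → R} (h : Br N S) (τ : F)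
    (hq : ∀ k, k < N → S k * S k = (τ - 1) • S k + τ • (1:R)) (m : ℕ) (hm : m ≤ N) (i : ℕ) (hi : i < m) :
    S i * Um S m = τ • Um S m := by
  induction m generalizing i with
  | zero => omega
  | succ m ih =>
    rw [Um, ← mul_assoc, Am, mul_sum, sum_mul, sum_mul, smul_sum]
    rw [← add_sum_erase _ _ (mem_range.2 (show i < m + 2 by omega)),
      ← add_sum_erase _ _ (mem_erase.2 ⟨show i + 1 ≠ i by omega, mem_range.2 (show i + 1 < m + 2 by omega)⟩),
      ← add_sum_erase (range (m+2)) (fun j => τ • (Cp S j (m+1-j) * Um S m)) (mem_range.2 (show i < m + 2 by omega)),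
      ← add_sum_erase _ (fun j => τ • (Cp S j (m+1-j) * Um S m)) (mem_erase.2 ⟨show i + 1 ≠ i by omega, mem_range.2 (show i + 1 < m + 2 by omega)⟩)]
    have e : ∀ j ∈ ((range (m+2)).erase i).erase (i+1), S i * Cp S j (m+1-j) * Um S m = τ • (Cp S j (m+1-j) * Um S m) := by
      intro j hj
      simp only [mem_erase, mem_range] at hj
      rcases lt_or_gt_of_ne hj.2.1 with h1 | h1
      · obtain ⟨l, rfl⟩ : ∃ l, i = l + 1 := ⟨i - 1, by omega⟩
        rw [h.shift j (m+1-j) l (by omega) (by omega) (by omega), mul_assoc, ih (by omega) l (by omega), mul_smul_comm]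
      · have : S i * Cp S j (m+1-j) = Cp S j (m+1-j) * S i := by
          apply Cp_comm
          intro a ha1 ha2
          exact h.comm _ _ (by omega) (by omega)
        rw [this, mul_assoc, ih (by omega) i (by omega), mul_smul_comm]
    rw [sum_congr rfl e, ← add_assoc, ← add_assoc]
    congr 1
    obtain ⟨l, hl⟩ : ∃ l, m + 1 - i = l + 1 := ⟨m - i, by omega⟩
    have hl' : m + 1 - (i+1) = l := by omega
    rw [hl, hl', Cp, ← mul_assoc, hq i (by omega)]
    simp only [add_mul, smul_mul_assoc, one_mul, sub_smul, sub_mul, one_smul]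
    abel

theorem Um_comm {N : ℕ} {S : ℕ → R} (z : R) (hz : ∀ k, k < N → S k * z = z * S k) (m : ℕ) (hm : m ≤ N) :
    Um S m * z = z * Um S m := by
  induction m with
  | zero => simp [Um]
  | succ m ih =>
    rw [Um, mul_assoc, ih (by omega), ← mul_assoc, ← mul_assoc]
    congr 1
    rw [Am, sum_mul, mul_sum]
    apply sum_congr rfl
    intro j hj
    have := mem_range.1 hj
    symm
    apply Cp_comm
    intro a _ ha
    exact (hz a (by omega)).symm
end abstr

variable {N : ℕ} {T : ℕ → P (N+1) →ₗ[K] P (N+1)}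

/-- the Poincaré polynomial -/
noncomputable def cc : ℕ → K
  | 0 => 1
  | m + 1 => (∑ j ∈ range (m+2), t ^ (m+1-j)) * cc m

theorem tsum_ne (m : ℕ) : (∑ j ∈ range (m+2), t ^ (m+1-j) : K) ≠ 0 := by
  have e : (∑ j ∈ range (m+2), t ^ (m+1-j) : K) = ∑ j ∈ range (m+2), t ^ j := by
    rw [← sum_range_reflect]
    apply sum_congr rfl
    intro j hj
    have := mem_range.1 hj
    congr 1
    omega
  rw [e]
  intro h
  have h2 := geom_sum_mul (t:K) (m+2)
  rw [h, zero_mul] at h2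
  have := qt_ne 0 (m+2) (by omega)
  apply this
  linear_combination h2

theorem cc_ne (m : ℕ) : cc m ≠ 0 := by
  induction m with
  | zero => exact one_ne_zero
  | succ m ih => exact mul_ne_zero (tsum_ne m) ih

/-- operators as elements of End -/
abbrev TE (T : ℕ → P (N+1) →ₗ[K] P (N+1)) : ℕ → Module.End K (P (N+1)) := T

theorem Cp_fun (W : Submodule K (P (N+1))) (φ : P (N+1) →ₗ[K] K)
    (hW : ∀ k, k < N → ∀ f ∈ W, T k f ∈ W) (hφ : ∀ k, k < N → ∀ f ∈ W, φ (T k f) = t * φ f)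
    (j m : ℕ) (h : j + m ≤ N) (f : P (N+1)) (hf : f ∈ W) :
    Cp (TE T) j m f ∈ W ∧ φ (Cp (TE T) j m f) = t ^ m * φ f := by
  induction m generalizing j with
  | zero => simpa [Cp] using hf
  | succ m ih =>
    obtain ⟨h1, h2⟩ := ih (j+1) (by omega)
    rw [Cp, Module.End.mul_apply]
    refine ⟨hW j (by omega) _ h1, ?_⟩
    have := hφ j (by omega) _ h1
    rw [this, h2]; ring

theorem Um_fun (W : Submodule K (P (N+1))) (φ : P (N+1) →ₗ[K] K)
    (hW : ∀ k, k < N → ∀ f ∈ W, T k f ∈ W) (hφ : ∀ k, k < N → ∀ f ∈ W, φ (T k f) = t * φ f)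
    (m : ℕ) (h : m ≤ N) (f : P (N+1)) (hf : f ∈ W) :
    Um (TE T) m f ∈ W ∧ φ (Um (TE T) m f) = cc m * φ f := by
  induction m with
  | zero => simpa [Um, cc] using hf
  | succ m ih =>
    obtain ⟨h1, h2⟩ := ih (by omega)
    rw [Um, Module.End.mul_apply, Am, LinearMap.sum_apply]
    constructor
    · apply Submodule.sum_mem
      intro j hj
      have := mem_range.1 hj
      exact (Cp_fun W φ hW hφ j _ (by omega) _ h1).1
    · rw [map_sum, cc, mul_assoc, ← h2, sum_mul]
      apply sum_congr rfl
      intro j hj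
      have := mem_range.1 hj
      exact (Cp_fun W φ hW hφ j _ (by omega) _ h1).2

theorem sg_of_T (hT : IsDL (N+1) t T) (k : Fin N) (f : P (N+1)) (h : T k f = t • f) : sg k f = f := by
  have e := DL hT k f
  rw [h, smul_eq_C_mul] at e
  have h0 : (C t * X k.castSucc - X k.succ : P (N+1)) ≠ 0 := by
    intro h0
    have := congrArg (eval (fun i => if i = k.castSucc then (0:K) else 1)) h0
    simp [(cs_ne k).symm] at this
  apply mul_left_cancel₀ h0
  linear_combination -e

theorem T_of_sg (hT : IsDL (N+1) t T) (k : Fin N) (f : P (N+1)) (h : sg k f = f) : T k f = t • f := by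
  apply DLu hT
  rw [h, smul_eq_C_mul]; ring

theorem sym_of_sg (f : P (N+1)) (h : ∀ k : Fin N, sg k f = f) (σ : Equiv.Perm (Fin (N+1))) :
    rename σ f = f := by
  have hσ : σ ∈ Submonoid.closure (Set.range fun i : Fin N => Equiv.swap i.castSucc i.succ) := by
    rw [Equiv.Perm.mclosure_swap_castSucc_succ]; trivial
  induction hσ using Submonoid.closure_induction with
  | mem x hx =>
    obtain ⟨k, rfl⟩ := hx
    exact h k
  | one => simp
  | mul x y _ _ hx hy =>
    have : (⇑(x * y) : Fin (N+1) → Fin (N+1)) = x ∘ y := rfl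
    rw [this, ← rename_rename, hy, hx]

theorem cf_sym (f : P (N+1)) (h : ∀ σ : Equiv.Perm (Fin (N+1)), rename σ f = f) (μ : Fin (N+1) → ℕ)
    (σ : Equiv.Perm (Fin (N+1))) : cf f (μ ∘ σ) = cf f μ := by
  rw [← cf_rename, h]

theorem Um_sym (hT : IsDL (N+1) t T) (f : P (N+1)) (σ : Equiv.Perm (Fin (N+1))) :
    rename σ (Um (TE T) N f) = Um (TE T) N f := by
  apply sym_of_sg
  intro k
  apply sg_of_T hT
  have := Um_T (S := TE T) (hk hT).br t (by
    intro k hk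
    apply LinearMap.ext
    intro g
    have := T_quad hT ⟨k, hk⟩ g
    simp only [Module.End.mul_apply, LinearMap.add_apply, LinearMap.smul_apply, Module.End.one_apply, smul_eq_C_mul, C_sub, C_1]
    exact this) N le_rfl k k.2
  exact LinearMap.congr_fun this f

theorem sumY_eq : (∑ i : Fin (N+1), Yop (N+1) q t T i) =
    ∑ i ∈ range (N+1), Ya (R := Module.End K (P (N+1))) N t T (Tinv (N+1) t T) (omegaOp (N+1) q) i := by
  rw [← Fin.sum_univ_eq_sum_range]
  apply sum_congr rfl
  intro i _
  exact Yop_eq i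

theorem sumY_Um (hT : IsDL (N+1) t T) (f : P (N+1)) : (∑ i : Fin (N+1), Yop (N+1) q t T i) (Um (TE T) N f) =
    Um (TE T) N ((∑ i : Fin (N+1), Yop (N+1) q t T i) f) := by
  have := Um_comm (S := TE T) (N := N) (∑ i : Fin (N+1), Yop (N+1) q t T i) (by
    intro k hk'
    rw [sumY_eq]
    exact (hk hT).sumY k hk') N le_rfl
  exact (LinearMap.congr_fun this f).symm

/-- action of Y_i on a symmetric polynomial -/
theorem Y_sym (hT : IsDL (N+1) t T) (G : P (N+1)) (hG : ∀ k : Fin N, T k G = t • G) (i : Fin (N+1)) :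
    Yop (N+1) q t T i G = (t ^ N)⁻¹ • Cp (TE T) i (N-i) (om N G) := by
  have e : ∀ j, j ≤ N → Cp (R := Module.End K (P (N+1))) (Tinv (N+1) t T) 0 j G = (t⁻¹) ^ j • G := by
    intro j
    induction j with
    | zero => intro _; simp [Cp]
    | succ j ih =>
      intro hj
      rw [Cp_snoc, Module.End.mul_apply, zero_add]
      have : Tinv (N+1) t T j G = t⁻¹ • G := by
        have := hG ⟨j, hj⟩
        simp only at this
        rw [Tinv_apply, this]
        simp only [smul_eq_C_mul]
        have h := Ct_mul (N := N)
        linear_combination G * h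
      rw [this, map_smul, ih (by omega), smul_smul, pow_succ, mul_comm]
  rw [Yop_eq, Ya]
  simp only [LinearMap.smul_apply, Module.End.mul_apply]
  rw [e i (by omega), map_smul, map_smul, smul_smul, omegaOp_eq]
  congr 1
  have h1 : t ^ N = t ^ (N - (i:ℕ)) * t ^ (i:ℕ) := by rw [← pow_add]; congr 1; omega
  rw [h1, mul_inv, inv_pow]

end Stmt19P

open Finset MvPolynomial Stmt19
namespace Stmt19P
set_option linter.unusedSimpArgs false

variable {N : ℕ} {T : ℕ → P (N+1) →ₗ[K] P (N+1)}

/-- sum of squares -/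
def Qs {n : ℕ} (ν : Fin n → ℕ) : ℕ := ∑ i, ν i ^ 2

theorem Qs_perm {n : ℕ} (ν : Fin n → ℕ) (σ : Equiv.Perm (Fin n)) : Qs (ν ∘ σ) = Qs ν :=
  Equiv.sum_comp σ (fun i => ν i ^ 2)

theorem Qs_st (k : Fin N) (μ : Fin (N+1) → ℕ) (a b : ℕ) : Qs (st k μ a b) =
    a ^ 2 + (b ^ 2 + ∑ i ∈ (univ.erase k.castSucc).erase k.succ, μ i ^ 2) := by
  unfold Qs
  rw [← add_sum_erase _ _ (mem_univ k.castSucc),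
    ← add_sum_erase _ _ (mem_erase.2 ⟨(cs_ne k).symm, mem_univ k.succ⟩), st_fst, st_snd]
  congr 2
  apply sum_congr rfl
  intro i hi
  simp only [mem_erase] at hi
  rw [st_oth _ _ _ _ _ hi.2.1 hi.1]

theorem sq_wide (a b a' b' : ℕ) (h : a' + b' = a + b) (h2 : max a b < max a' b') :
    a ^ 2 + b ^ 2 < a' ^ 2 + b' ^ 2 := by
  have h3 : a' * b' < a * b := by
    rcases le_total a b with h4 | h4 <;> rcases le_total a' b' with h5 | h5 <;>
      simp only [h4, h5, max_eq_left, max_eq_right] at h2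
    · obtain ⟨d, rfl⟩ : ∃ d, b' = b + d := ⟨b' - b, by omega⟩
      have : a = a' + d := by omega
      subst this; nlinarith
    · obtain ⟨d, rfl⟩ : ∃ d, a' = b + d := ⟨a' - b, by omega⟩
      have : a = b' + d := by omega
      subst this; nlinarith
    · obtain ⟨d, rfl⟩ : ∃ d, b' = a + d := ⟨b' - a, by omega⟩
      have : b = a' + d := by omega
      subst this; nlinarith
    · obtain ⟨d, rfl⟩ : ∃ d, a' = a + d := ⟨a' - a, by omega⟩
      have : b = b' + d := by omega
      subst this; nlinarith
  have : (a'+b')^2 = (a+b)^2 := by rw [h]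
  nlinarith

theorem Qs_wide (k : Fin N) (μ : Fin (N+1) → ℕ) (a b a' b' : ℕ) (h : a' + b' = a + b)
    (h2 : max a b < max a' b') : Qs (st k μ a b) < Qs (st k μ a' b') := by
  rw [Qs_st, Qs_st]
  have := sq_wide a b a' b' h h2
  omega

/-- polynomials with support in the ball of radius B -/
noncomputable def Ws (N B : ℕ) : Submodule K (P (N+1)) where
  carrier := {f | Sup (fun ν => Qs ν ≤ B) f}
  add_mem' := fun h h' => Sup.add h h'
  zero_mem' := fun μ h => absurd (cf_zero μ) h
  smul_mem' := fun c _ h => Sup.smul h c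

theorem Ws_T (hT : IsDL (N+1) t T) (B : ℕ) (k : ℕ) (hk : k < N) (f : P (N+1)) (hf : f ∈ Ws N B) :
    T k f ∈ Ws N B := by
  have hf : Sup (fun ν => Qs ν ≤ B) f := hf
  refine Sup.mapT hf hT ⟨k, hk⟩ ?_
  intro μ a b a' b' h1 h2 h3
  refine le_trans ?_ h3
  rcases h2.lt_or_eq with h | h
  · exact (Qs_wide _ μ _ _ _ _ h1.symm h).le
  · rw [Qs_st, Qs_st]
    have : (a' = a ∧ b' = b) ∨ (a' = b ∧ b' = a) := by omega
    rcases this with ⟨rfl, rfl⟩ | ⟨rfl, rfl⟩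
    · exact le_rfl
    · omega

theorem rot_ro (μ : Fin (N+1) → ℕ) : rot μ = μ ∘ (ro N).symm := by
  funext i
  obtain ⟨j, rfl⟩ := (ro N).surjective i
  rw [Function.comp_apply, Equiv.symm_apply_apply]
  induction j using Fin.lastCases with
  | last => rw [ro_last]; simp [rot]
  | cast j => rw [ro_cast]; simp [rot]

theorem Ws_om (B : ℕ) (f : P (N+1)) (hf : f ∈ Ws N B) : om N f ∈ Ws N B := by
  intro μ h
  rw [cf_om] at h
  have : cf f (rot μ) ≠ 0 := right_ne_zero_of_mul h
  have := hf _ this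
  rwa [rot_ro, Qs_perm] at this

/-- the functional -/
noncomputable def ph (μ : Fin (N+1) → ℕ) : P (N+1) →ₗ[K] K where
  toFun f := ∑ σ : Equiv.Perm (Fin (N+1)), t ^ iv (μ ∘ σ) * cf f (μ ∘ σ)
  map_add' f g := by simp only [cf_add, mul_add, sum_add_distrib]
  map_smul' c f := by
    simp only [cf_smul, RingHom.id_apply, smul_eq_mul, mul_sum]
    exact sum_congr rfl fun σ _ => by ring

theorem ph_apply (μ : Fin (N+1) → ℕ) (f : P (N+1)) :
    ph μ f = ∑ σ : Equiv.Perm (Fin (N+1)), t ^ iv (μ ∘ σ) * cf f (μ ∘ σ) := rfl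

theorem ph_pair (hT : IsDL (N+1) t T) (k : Fin N) (f : P (N+1)) (ν : Fin (N+1) → ℕ)
    (hf : f ∈ Ws N (Qs ν)) (h : ν k.succ ≤ ν k.castSucc) :
    t ^ iv ν * (cf (T k f) ν - t * cf f ν) +
      t ^ iv (ν ∘ sw k) * (cf (T k f) (ν ∘ sw k) - t * cf f (ν ∘ sw k)) = 0 := by
  have hw : ∀ a' b', a' + b' = ν k.castSucc + ν k.succ →
      max (ν k.castSucc) (ν k.succ) < max a' b' → cf f (st k ν a' b') = 0 := by
    intro a' b' h1 h2
    by_contra h3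
    have h4 : Qs _ ≤ Qs ν := hf _ h3
    have := Qs_wide k ν _ _ _ _ h1 h2
    rw [← st_self] at this
    omega
  have e1 := cfT_ge hT k f ν _ _ h hw
  rw [← st_self, ← st_sw] at e1
  rcases h.lt_or_eq with h | h
  · have e2 := cfT_lt hT k f ν _ _ h (by
      intro a' b' h1 h2
      exact hw a' b' (by omega) (by rwa [max_comm] at h2))
    rw [← st_self, ← st_sw] at e2
    have hi := iv_sw k (ν ∘ sw k) (by simpa [sw_fst, sw_snd] using h)
    have : (ν ∘ sw k) ∘ sw k = ν := by funext i; simp [Function.comp, sw_sw]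
    rw [this] at hi
    rw [e1, e2, hi]; ring
  · have : ν ∘ sw k = ν := by rw [st_sw, h]; conv_rhs => rw [st_self k ν, h]
    rw [this] at e1 ⊢
    rw [e1]; ring

theorem ph_T (hT : IsDL (N+1) t T) (μ : Fin (N+1) → ℕ) (k : ℕ) (hk : k < N) (f : P (N+1))
    (hf : f ∈ Ws N (Qs μ)) : ph μ (T k f) = t * ph μ f := by
  set k' : Fin N := ⟨k, hk⟩
  let g : (Fin (N+1) → ℕ) → K := fun ν => t ^ iv ν * (cf (T k f) ν - t * cf f ν)
  have hg : ∀ σ : Equiv.Perm (Fin (N+1)), g (μ ∘ σ) + g (μ ∘ ⇑(σ * sw k')) = 0 := by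
    intro σ
    have hc : μ ∘ ⇑(σ * sw k') = (μ ∘ σ) ∘ sw k' := rfl
    rw [hc]
    rcases le_total ((μ ∘ σ) k'.succ) ((μ ∘ σ) k'.castSucc) with h | h
    · exact ph_pair hT k' f (μ ∘ σ) (by rwa [Qs_perm]) h
    · have := ph_pair hT k' f ((μ ∘ σ) ∘ sw k') (by rwa [Qs_perm, Qs_perm]) (by simpa [sw_fst, sw_snd] using h)
      have e : ((μ ∘ σ) ∘ sw k') ∘ sw k' = μ ∘ σ := by funext i; simp [Function.comp, sw_sw]
      rw [e] at this
      rw [add_comm]; exact this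
  have h2 : ∑ σ : Equiv.Perm (Fin (N+1)), g (μ ∘ ⇑(σ * sw k')) = ∑ σ : Equiv.Perm (Fin (N+1)), g (μ ∘ σ) :=
    Equiv.sum_comp (Equiv.mulRight (sw k')) (fun σ : Equiv.Perm (Fin (N+1)) => g (μ ∘ σ))
  have h3 : ∑ σ : Equiv.Perm (Fin (N+1)), g (μ ∘ σ) = 0 := by
    have : (2:K) * ∑ σ : Equiv.Perm (Fin (N+1)), g (μ ∘ σ) = 0 := by
      rw [two_mul]; nth_rewrite 2 [← h2]
      rw [← sum_add_distrib]
      exact sum_eq_zero fun σ _ => hg σ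
    exact (mul_eq_zero.1 this).resolve_left two_ne_zero
  rw [ph_apply, ph_apply, ← sub_eq_zero, ← h3, mul_sum, ← sum_sub_distrib]
  apply sum_congr rfl
  intro σ _
  simp only [g]; ring

/-- the orbit sums -/
noncomputable def Ss {n : ℕ} (μ : Fin n → ℕ) : K := ∑ σ : Equiv.Perm (Fin n), t ^ iv (μ ∘ σ)
noncomputable def Wq (μ : Fin (N+1) → ℕ) : K := 
  ∑ σ : Equiv.Perm (Fin (N+1)), t ^ iv (μ ∘ σ) * q ^ μ (σ (Fin.last N))

theorem ph_sym (μ : Fin (N+1) → ℕ) (G : P (N+1)) (hG : ∀ σ : Equiv.Perm (Fin (N+1)), rename σ G = G) :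
    ph μ G = Ss μ * cf G μ := by
  rw [ph_apply, Ss, sum_mul]
  exact sum_congr rfl fun σ _ => by rw [cf_sym G hG]

theorem ph_om_sym (μ : Fin (N+1) → ℕ) (G : P (N+1)) (hG : ∀ σ : Equiv.Perm (Fin (N+1)), rename σ G = G) :
    ph μ (om N G) = Wq μ * cf G μ := by
  rw [ph_apply, Wq, sum_mul]
  exact sum_congr rfl fun σ _ => by
    rw [cf_om, rot_ro, cf_sym G hG, cf_sym G hG, Function.comp_apply, mul_assoc]

theorem eig_rel (hT : IsDL (N+1) t T) (μ : Fin (N+1) → ℕ) (G : P (N+1))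
    (hG : ∀ σ : Equiv.Perm (Fin (N+1)), rename σ G = G) (hW : G ∈ Ws N (Qs μ)) (e : K)
    (he : (∑ i : Fin (N+1), Yop (N+1) q t T i) G = e • G) (h0 : cf G μ ≠ 0) :
    e * Ss μ = (∑ i : Fin (N+1), (t ^ (i:ℕ))⁻¹) * Wq μ := by
  apply mul_right_cancel₀ h0
  have h1 := congrArg (ph μ) he
  rw [map_smul, ph_sym μ G hG, LinearMap.sum_apply, map_sum, smul_eq_mul] at h1
  rw [mul_assoc, mul_assoc, ← h1, sum_mul]
  apply sum_congr rfl
  intro i _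
  rw [Y_sym hT G (fun k => T_of_sg hT k G (hG _)) i, map_smul,
    (Cp_fun _ (ph μ) (fun k hk f hf => Ws_T hT (Qs μ) k hk f hf) (fun k hk f hf => ph_T hT μ k hk f hf)
      i (N-i) (by omega) _ (Ws_om _ _ hW)).2, ph_om_sym μ G hG, smul_eq_mul, ← mul_assoc]
  congr 1
  have h1 : t ^ N = t ^ (N - (i:ℕ)) * t ^ (i:ℕ) := by rw [← pow_add]; congr 1; omega
  rw [h1, mul_inv]
  have := pow_ne_zero (N - (i:ℕ)) t_ne
  field_simp

end Stmt19P

open Finset MvPolynomial Stmt19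
namespace Stmt19P
set_option linter.unusedSimpArgs false

variable {N : ℕ} {T : ℕ → P (N+1) →ₗ[K] P (N+1)}

theorem sq_formula (a M : ℕ) (h : a ≤ M) : a ^ 2 = a + 2 * ∑ c ∈ range M, (a - (c + 1)) := by
  induction M generalizing a with
  | zero => simp at h; simp [h]
  | succ M ih =>
    rcases Nat.eq_zero_or_pos a with rfl | h0
    · simp
    · obtain ⟨b, rfl⟩ : ∃ b, a = b + 1 := ⟨a - 1, by omega⟩
      rw [sum_range_succ', ]
      have : ∀ c ∈ range M, b + 1 - (c + 1 + 1) = b - (c + 1) := fun c _ => by omega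
      rw [sum_congr rfl this]
      have := ih b (by omega)
      simp only [zero_add, Nat.add_sub_cancel]
      nlinarith

theorem Qs_formula {n : ℕ} (ν : Fin n → ℕ) (M : ℕ) (h : ∀ i, ν i ≤ M) :
    Qs ν = Wt n 0 ν + 2 * ∑ c ∈ range M, Wt 0 c ν := by
  unfold Qs Wt
  rw [sum_comm, mul_sum, ← sum_add_distrib]
  apply sum_congr rfl
  intro i _
  rw [sq_formula _ M (h i)]
  simp

theorem Le_Qs {n : ℕ} (ν η : Fin n → ℕ) (h : Le ν η) : Qs ν ≤ Qs η := by
  have h1 : ∀ i, ν i ≤ ∑ i, ν i + ∑ i, η i := fun i =>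
    (single_le_sum (f := ν) (fun _ _ => Nat.zero_le _) (mem_univ i)).trans (Nat.le_add_right _ _)
  have h2 : ∀ i, η i ≤ ∑ i, ν i + ∑ i, η i := fun i =>
    (single_le_sum (f := η) (fun _ _ => Nat.zero_le _) (mem_univ i)).trans (Nat.le_add_left _ _)
  rw [Qs_formula ν _ h1, Qs_formula η _ h2]
  have := h n le_rfl 0
  have h3 : ∑ c ∈ range (∑ i, ν i + ∑ i, η i), Wt 0 c ν ≤ ∑ c ∈ range (∑ i, ν i + ∑ i, η i), Wt 0 c η :=
    sum_le_sum fun c _ => h 0 (Nat.zero_le _) c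
  omega

theorem Wt_diff {n : ℕ} (j c : ℕ) (ν : Fin n → ℕ) :
    Wt n c ν = Wt j c ν + ∑ i : Fin n, (if (i:ℕ) < j then 0 else if c < ν i then 1 else 0) := by
  unfold Wt
  rw [← sum_add_distrib]
  apply sum_congr rfl
  intro i _
  have := i.2
  split_ifs <;> omega

theorem Wt_perm {n : ℕ} (c : ℕ) (ν : Fin n → ℕ) (σ : Equiv.Perm (Fin n)) : Wt n c (ν ∘ σ) = Wt n c ν := by
  have : ∀ ν : Fin n → ℕ, Wt n c ν = ∑ i, (ν i - c) := by
    intro ν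
    unfold Wt
    exact sum_congr rfl fun i _ => by simp
  rw [this, this]
  exact Equiv.sum_comp σ (fun i => ν i - c)

theorem Le_orbit {n : ℕ} (η : Fin n → ℕ) (hη : Monotone η) (σ : Equiv.Perm (Fin n)) (h : Le (η ∘ σ) η) :
    η ∘ σ = η := by
  have h1 : ∀ j, η j ≤ (η ∘ σ) j := by
    intro j
    by_contra hc
    push Not at hc
    set c := (η ∘ σ) j with hcdef
    have e1 := Wt_diff j c η
    have e2 := Wt_diff j c (η ∘ σ)
    rw [Wt_perm] at e2
    have e3 := h j j.2.le c
    have e4 : ∑ i : Fin n, (if (i:ℕ) < j then 0 else if c < (η ∘ σ) i then 1 else 0) <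
        ∑ i : Fin n, (if (i:ℕ) < j then 0 else if c < η i then 1 else 0) := by
      apply sum_lt_sum
      · intro i _
        split_ifs with a1 a2 a3 a3
        · exact le_rfl
        · exact le_rfl
        · exact absurd (lt_of_lt_of_le hc (hη (show j ≤ i by rw [Fin.le_def]; omega))) a3
        · omega
        · omega
      · refine ⟨j, mem_univ _, ?_⟩
        rw [if_neg (lt_irrefl _), if_neg (lt_irrefl _), if_neg (lt_irrefl _), if_pos hc]
        exact one_pos
    omega
  have h2 : ∑ j, η j = ∑ j, (η ∘ σ) j := (Equiv.sum_comp σ η).symm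
  have h3 := (sum_eq_sum_iff_of_le (fun j _ => h1 j)).1 h2
  funext j
  exact (h3 j (mem_univ j)).symm

theorem legCo_bij {n : ℕ} (η : Fin n → ℕ) : ∃ r : Equiv.Perm (Fin n), ∀ i, ((r i : Fin n) : ℕ) = legCo n η i := by
  have hl : ∀ i, legCo n η i < n := by
    intro i
    rcases n with _ | n
    · exact i.elim0
    · have := legCo_le η i; omega
  have hinj : Function.Injective (fun i => (⟨legCo n η i, hl i⟩ : Fin n)) := by
    intro i j h
    have h : legCo n η i = legCo n η j := by simpa using h
    by_contra hne
    have h1 := rl_iff η i j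
    have h2 := rl_iff η j i
    rw [h] at h1 h2
    simp only [lt_irrefl, iff_false] at h1 h2
    unfold rl at h1 h2
    rcases lt_or_gt_of_ne hne with h3 | h3 <;> rcases lt_trichotomy (η i) (η j) with h4 | h4 | h4 <;> simp_all
  exact ⟨Equiv.ofBijective _ (Finite.injective_iff_bijective.1 hinj), fun i => rfl⟩

theorem anti_unique {n : ℕ} (κ : Fin n → ℕ) (hκ : Antitone κ) (σ : Equiv.Perm (Fin n)) (h : Antitone (κ ∘ σ)) :
    κ ∘ σ = κ := by
  have := Tuple.unique_antitone (f := κ) (σ := σ) (τ := 1) h (by simpa using hκ)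
  simpa using this

theorem legCo_sort {n : ℕ} (κ : Fin n → ℕ) (hκ : Antitone κ) (σ : Equiv.Perm (Fin n)) :
    ∃ r : Equiv.Perm (Fin n), (∀ i, ((r i : Fin n) : ℕ) = legCo n (κ ∘ σ) i) ∧ κ ∘ σ = κ ∘ r := by
  obtain ⟨r, hr⟩ := legCo_bij (κ ∘ σ)
  refine ⟨r, hr, ?_⟩
  have := anti_unique κ hκ (σ * r⁻¹) (by
    intro a b hab
    rcases hab.lt_or_eq with h | h
    · have h2 : rl (κ ∘ σ) (r⁻¹ b) (r⁻¹ a) := by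
        rw [rl_iff, ← hr, ← hr]
        simpa using h
      rcases h2 with h2 | h2
      · exact h2.le
      · exact h2.1.le
    · rw [h])
  funext i
  have := congrFun this (r i)
  simpa using this

/-- eigenvalue -/
noncomputable def eg (κ : Fin (N+1) → ℕ) : K := ∑ i : Fin (N+1), q ^ κ i * (t ^ (i : ℕ))⁻¹

theorem eg_inj (κ μ : Fin (N+1) → ℕ) (h : eg κ = eg μ) : κ = μ := by
  have e : ∀ κ : Fin (N+1) → ℕ, t ^ N * eg κ = algebraMap (MvPolynomial (Fin 2) ℚ) K
      (∑ i : Fin (N+1), monomial (Finsupp.single 0 (κ i) + Finsupp.single 1 (N - (i:ℕ))) 1) := by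
    intro κ
    rw [eg, mul_sum, map_sum]
    apply sum_congr rfl
    intro i _
    have h1 : t ^ N = t ^ (N - (i:ℕ)) * t ^ (i:ℕ) := by rw [← pow_add]; congr 1; omega
    have h2 : (monomial (Finsupp.single 0 (κ i) + Finsupp.single 1 (N - (i:ℕ))) 1 : MvPolynomial (Fin 2) ℚ) =
      X 0 ^ κ i * X 1 ^ (N - (i:ℕ)) := by
      rw [X_pow_eq_monomial, X_pow_eq_monomial, monomial_mul, one_mul]
    rw [h1, h2, map_mul, map_pow, map_pow]
    change _ = q ^ κ i * t ^ (N - (i:ℕ))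
    have := pow_ne_zero (i:ℕ) t_ne
    field_simp
  have h2 := e κ
  rw [h, e μ] at h2
  have h3 := IsFractionRing.injective (MvPolynomial (Fin 2) ℚ) K h2
  funext b
  have h4 := congrArg (coeff (Finsupp.single 0 (κ b) + Finsupp.single 1 (N - (b:ℕ)))) h3
  have hc : ∀ (μ : Fin (N+1) → ℕ) (i : Fin (N+1)), 
    (Finsupp.single (0 : Fin 2) (μ i) + Finsupp.single 1 (N - (i:ℕ)) =
      Finsupp.single 0 (κ b) + Finsupp.single 1 (N - (b:ℕ))) ↔ i = b ∧ μ b = κ b := by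
    intro μ i
    constructor
    · intro h
      have h0 := DFunLike.congr_fun h 0
      have h1 := DFunLike.congr_fun h 1
      simp at h0 h1
      have : i = b := by apply Fin.ext; omega
      subst this
      exact ⟨rfl, h0⟩
    · rintro ⟨rfl, h⟩; rw [h]
  simp only [coeff_sum, coeff_monomial, hc] at h4
  simp only [and_true] at h4
  simp only [ite_and, sum_ite_eq', mem_univ, if_true] at h4
  by_contra hne
  rw [if_neg (Ne.symm hne)] at h4
  exact zero_ne_one h4

/-- size of the stabilizer coset -/
def stb {n : ℕ} (κ : Fin n → ℕ) : ℕ := (univ.filter fun σ : Equiv.Perm (Fin n) => κ ∘ σ = κ ∘ Fin.rev).card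

theorem stb_pos {n : ℕ} (κ : Fin n → ℕ) : 0 < stb κ := by
  apply card_pos.2
  exact ⟨Fin.revPerm, by simp; rfl⟩

theorem rev_comp {n : ℕ} (κ : Fin n → ℕ) (σ : Equiv.Perm (Fin n)) :
    κ ∘ σ = (κ ∘ Fin.rev) ∘ ⇑((Fin.revPerm : Equiv.Perm (Fin n)) * σ) := by
  funext i; simp

theorem ph_E (κ : Fin (N+1) → ℕ) (hκ : Antitone κ) (E : P (N+1)) (hE : Good T (κ ∘ Fin.rev) E) :
    ph κ E = stb κ * t ^ iv (κ ∘ Fin.rev) := by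
  rw [ph_apply]
  have : ∀ σ : Equiv.Perm (Fin (N+1)), t ^ iv (κ ∘ σ) * cf E (κ ∘ σ) =
      if κ ∘ σ = κ ∘ Fin.rev then t ^ iv (κ ∘ Fin.rev) else 0 := by
    intro σ
    split_ifs with h
    · rw [h, hE.one, mul_one]
    · have : cf E (κ ∘ σ) = 0 := by
        by_contra h0
        apply h
        have h1 := hE.sup _ h0
        rw [rev_comp] at h1 ⊢
        apply Le_orbit _ _ _ h1
        exact hκ.comp (fun a b h => Fin.rev_le_rev.2 h)
      rw [this, mul_zero]
  rw [sum_congr rfl fun σ _ => this σ, ← sum_filter, sum_const, stb, nsmul_eq_mul]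

theorem stb_ne (κ : Fin (N+1) → ℕ) : (stb κ : K) * t ^ iv (κ ∘ Fin.rev) ≠ 0 :=
  mul_ne_zero (Nat.cast_ne_zero.2 (stb_pos κ).ne') (pow_ne_zero _ t_ne)

/-- the symmetrized polynomial -/
theorem sym_ex (hT : IsDL (N+1) t T) (κ : Fin (N+1) → ℕ) (hκ : Antitone κ) :
    ∃ G : P (N+1), (∀ σ : Equiv.Perm (Fin (N+1)), rename σ G = G) ∧ G ∈ Ws N (Qs κ) ∧
      (∑ i : Fin (N+1), Yop (N+1) q t T i) G = eg κ • G ∧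
      Ss κ * cf G κ = cc N * (stb κ * t ^ iv (κ ∘ Fin.rev)) ∧
      ev N G = cc N * Vv (κ ∘ Fin.rev) := by
  obtain ⟨E, hE⟩ := good_ex hT (κ ∘ Fin.rev)
  have hEW : E ∈ Ws N (Qs κ) := by
    intro ν hν
    have := Le_Qs _ _ (hE.sup ν hν)
    rwa [show κ ∘ Fin.rev = κ ∘ Fin.revPerm from rfl, Qs_perm] at this
  have hU := Um_fun _ (ph κ) (fun k hk f hf => Ws_T hT (Qs κ) k hk f hf)
    (fun k hk f hf => ph_T hT κ k hk f hf) N le_rfl E hEW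
  refine ⟨Um (TE T) N E, Um_sym hT E, hU.1, ?_, ?_, ?_⟩
  · rw [sumY_Um hT, LinearMap.sum_apply, sum_congr rfl fun i _ => hE.eig i, ← sum_smul, map_smul]
    congr 1
    obtain ⟨r, hr, hr2⟩ := legCo_sort κ hκ Fin.revPerm
    have hr2 : κ ∘ Fin.rev = κ ∘ r := hr2
    have hr : ∀ i, ((r i : Fin (N+1)) : ℕ) = legCo (N+1) (κ ∘ Fin.rev) i := hr
    rw [eg, ← Equiv.sum_comp r (fun i : Fin (N+1) => q ^ κ i * (t ^ (i : ℕ))⁻¹)]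
    apply sum_congr rfl
    intro i _
    rw [← hr, hr2, Function.comp_apply, div_eq_mul_inv]
  · rw [← ph_E κ hκ E hE, ← hU.2, ph_sym _ _ (Um_sym hT E)]
  · have := Um_fun (T := T) ⊤ (ev N).toLinearMap (fun k hk f hf => trivial)
      (fun k hk f hf => ev_T hT ⟨k, hk⟩ f) N le_rfl E trivial
    rw [← hE.val]
    exact this.2

theorem Ss_ne (hT : IsDL (N+1) t T) (κ : Fin (N+1) → ℕ) (hκ : Antitone κ) : Ss κ ≠ 0 := by
  obtain ⟨G, _, _, _, h, _⟩ := sym_ex hT κ hκ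
  intro h0
  rw [h0, zero_mul] at h
  exact mul_ne_zero (cc_ne N) (stb_ne κ) h.symm

theorem sym_zero (hT : IsDL (N+1) t T) (κ : Fin (N+1) → ℕ) (G : P (N+1))
    (hG : ∀ σ : Equiv.Perm (Fin (N+1)), rename σ G = G)
    (he : (∑ i : Fin (N+1), Yop (N+1) q t T i) G = eg κ • G) (h0 : cf G κ = 0) : G = 0 := by
  by_contra hne
  obtain ⟨ν, hν, hmax⟩ := exists_max_image G.support (fun ν => Qs (⇑ν)) (by
    rwa [nonempty_iff_ne_empty, Ne, support_eq_empty])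
  have hcf : ∀ ν : Fin (N+1) → ℕ, cf G ν ≠ 0 → Finsupp.equivFunOnFinite.symm ν ∈ G.support := by
    intro ν h; exact mem_support_iff.2 h
  set σ : Equiv.Perm (Fin (N+1)) := Tuple.sort ν * Fin.revPerm with hσ
  set μ : Fin (N+1) → ℕ := ν ∘ σ with hμ
  have hanti : Antitone μ := by
    have := Tuple.monotone_sort (⇑ν)
    intro a b hab
    exact this (Fin.rev_le_rev.2 hab)
  have h1 : cf G μ ≠ 0 := by
    rw [hμ, cf_sym G hG]
    have := mem_support_iff.1 hν
    unfold cf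
    simpa using this
  have h2 : G ∈ Ws N (Qs μ) := by
    intro ρ hρ
    have := hmax _ (hcf _ hρ)
    rw [hμ, Qs_perm]
    simpa using this
  have e1 := eig_rel hT μ G hG h2 _ he h1
  obtain ⟨G', g1, g2, g3, g4, _⟩ := sym_ex hT μ hanti
  have h3 : cf G' μ ≠ 0 := by
    intro h0
    rw [h0, mul_zero] at g4
    exact mul_ne_zero (cc_ne N) (stb_ne μ) g4.symm
  have e2 := eig_rel hT μ G' g1 g2 _ g3 h3
  rw [← e2] at e1
  have := eg_inj _ _ (mul_right_cancel₀ (Ss_ne hT μ hanti) e1)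
  rw [this] at h0
  exact h1 h0

theorem value_pre (hT : IsDL (N+1) t T) (κ : Fin (N+1) → ℕ) (hκ : Antitone κ) (G : P (N+1))
    (hG : ∀ σ : Equiv.Perm (Fin (N+1)), rename σ G = G)
    (he : (∑ i : Fin (N+1), Yop (N+1) q t T i) G = eg κ • G) (h1 : cf G κ = 1) :
    ev N G * (stb κ * t ^ iv (κ ∘ Fin.rev)) = Vv (κ ∘ Fin.rev) * Ss κ := by
  obtain ⟨G', g1, g2, g3, g4, g5⟩ := sym_ex hT κ hκ
  have := sym_zero hT κ (G' - cf G' κ • G) (by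
    intro σ; rw [map_sub, map_smul, hG, g1]) (by
    rw [map_sub, map_smul, g3, he, smul_sub, smul_comm]) (by
    rw [cf_sub, cf_smul, h1]; ring)
  have h2 : G' = cf G' κ • G := sub_eq_zero.1 this
  have h3 := congrArg (ev N) h2
  rw [map_smul, g5, smul_eq_mul] at h3
  apply mul_left_cancel₀ (cc_ne N)
  linear_combination (-ev N G) * g4 + (-Ss κ) * h3

end Stmt19P

open Finset MvPolynomial Stmt19
namespace Stmt19P
set_option linter.unusedSimpArgs false

/-- multiplicity -/
def mm {n : ℕ} (ν : Fin n → ℕ) (v : ℕ) : ℕ := ∑ i, if ν i = v then 1 else 0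
/-- number of parts at least v -/
def LL {n : ℕ} (ν : Fin n → ℕ) (v : ℕ) : ℕ := ∑ i, if v ≤ ν i then 1 else 0
/-- delete the entry p -/
def del {n : ℕ} (ν : Fin (n+1) → ℕ) (p : Fin (n+1)) : Fin n → ℕ := fun i => ν (Equiv.swap 0 p i.succ)
/-- (t;t)_m -/
noncomputable def tf (m : ℕ) : K := ∏ i ∈ range m, (1 - t ^ (i+1))

theorem sum_del {n : ℕ} {M : Type*} [AddCommMonoid M] (ν : Fin (n+1) → ℕ) (p : Fin (n+1)) (f : ℕ → M) :
    ∑ j, f (ν j) = f (ν p) + ∑ i, f (del ν p i) := by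
  rw [← Equiv.sum_comp (Equiv.swap 0 p), Fin.sum_univ_succ, Equiv.swap_apply_left]
  rfl

theorem mm_del {n : ℕ} (ν : Fin (n+1) → ℕ) (p : Fin (n+1)) (v : ℕ) :
    mm ν v = (if ν p = v then 1 else 0) + mm (del ν p) v :=
  sum_del ν p (fun x => if x = v then 1 else 0)

theorem LL_mm {n : ℕ} (ν : Fin n → ℕ) (v : ℕ) : LL ν v = LL ν (v+1) + mm ν v := by
  unfold LL mm
  rw [← sum_add_distrib]
  exact sum_congr rfl fun i _ => by split_ifs <;> omega

theorem iv_del {n : ℕ} (ν : Fin (n+1) → ℕ) (p : Fin (n+1)) (e : Equiv.Perm (Fin n)) :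
    iv (ν ∘ Equiv.Perm.decomposeFin.symm (p, e)) = LL ν (ν p + 1) + iv (del ν p ∘ e) := by
  rw [iv_succ]
  simp only [Function.comp_apply, Equiv.Perm.decomposeFin_symm_apply_zero, Equiv.Perm.decomposeFin_symm_apply_succ]
  congr 1
  unfold LL
  rw [sum_del ν p (fun x => if ν p + 1 ≤ x then 1 else 0), if_neg (by omega), zero_add]
  exact Equiv.sum_comp e (fun i => if ν p < del ν p i then 1 else 0)

theorem Ss_succ {n : ℕ} (ν : Fin (n+1) → ℕ) : Ss ν = ∑ p, t ^ LL ν (ν p + 1) * Ss (del ν p) := by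
  unfold Ss
  rw [← Equiv.sum_comp Equiv.Perm.decomposeFin.symm, Fintype.sum_prod_type]
  apply sum_congr rfl
  intro p _
  rw [mul_sum]
  apply sum_congr rfl
  intro e _
  rw [iv_del, pow_add]

theorem sum_fib {n : ℕ} (ν : Fin n → ℕ) (B : ℕ) (hB : ∀ i, ν i < B) (g : ℕ → K) :
    ∑ p, g (ν p) = ∑ v ∈ range B, (mm ν v : K) * g v := by
  rw [← sum_fiberwise_of_maps_to (s := univ) (t := range B) (g := ν) (fun i _ => mem_range.2 (hB i))]
  apply sum_congr rfl
  intro v _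
  rw [sum_congr rfl (fun i hi => by rw [(mem_filter.1 hi).2] : ∀ i ∈ univ.filter (fun i => ν i = v), g (ν i) = g v),
    sum_const, nsmul_eq_mul, mm, card_filter]

theorem key_sum {n : ℕ} (ν : Fin n → ℕ) (B : ℕ) (hB : ∀ i, ν i < B) :
    ∑ p, t ^ LL ν (ν p + 1) * (1 - t ^ mm ν (ν p)) / (mm ν (ν p) : K) = 1 - t ^ n := by
  rw [sum_fib ν B hB (fun v => t ^ LL ν (v+1) * (1 - t ^ mm ν v) / (mm ν v : K))]
  have : ∀ v ∈ range B, (mm ν v : K) * (t ^ LL ν (v+1) * (1 - t ^ mm ν v) / (mm ν v : K)) =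
      t ^ LL ν (v+1) - t ^ LL ν v := by
    intro v _
    rw [LL_mm ν v, pow_add]
    by_cases h : mm ν v = 0
    · rw [h]; simp
    · have : (mm ν v : K) ≠ 0 := Nat.cast_ne_zero.2 h
      field_simp
  rw [sum_congr rfl this, sum_range_sub (fun v => t ^ LL ν v)]
  have h1 : LL ν B = 0 := by
    unfold LL
    exact sum_eq_zero fun i _ => by rw [if_neg (by have := hB i; omega)]
  have h2 : LL ν 0 = n := by simp [LL]
  rw [h1, h2, pow_zero]

theorem Ss_closed {n : ℕ} (ν : Fin n → ℕ) (B : ℕ) (hB : ∀ i, ν i < B) :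
    Ss ν * ∏ v ∈ range B, tf (mm ν v) = (∏ v ∈ range B, ((mm ν v).factorial : K)) * tf n := by
  induction n with
  | zero => simp [Ss, mm, tf, iv]
  | succ n ih =>
    have hd : ∀ p i, del ν p i < B := fun p i => hB _
    have e1 : ∀ p, ∏ v ∈ range B, tf (mm ν v) = (1 - t ^ mm ν (ν p)) * ∏ v ∈ range B, tf (mm (del ν p) v) := by
      intro p
      have hp := mem_range.2 (hB p)
      rw [← mul_prod_erase _ _ hp, ← mul_prod_erase _ _ hp, ← mul_assoc]
      congr 1
      · rw [mm_del ν p, if_pos rfl, add_comm, tf, prod_range_succ, mul_comm]; rfl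
      · apply prod_congr rfl
        intro v hv
        rw [mm_del ν p, if_neg (ne_of_mem_erase hv).symm, zero_add]
    have e2 : ∀ p, ∏ v ∈ range B, ((mm ν v).factorial : K) = mm ν (ν p) * ∏ v ∈ range B, ((mm (del ν p) v).factorial : K) := by
      intro p
      have hp := mem_range.2 (hB p)
      rw [← mul_prod_erase _ _ hp, ← mul_prod_erase _ (fun v => ((mm (del ν p) v).factorial : K)) hp, ← mul_assoc]
      congr 1
      · rw [mm_del ν p, if_pos rfl, add_comm, Nat.factorial_succ]; push_cast; rfl
      · apply prod_congr rfl
        intro v hv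
        rw [mm_del ν p, if_neg (ne_of_mem_erase hv).symm, zero_add]
    have e3 : ∀ p, (mm ν (ν p) : K) ≠ 0 := by
      intro p
      rw [mm_del ν p, if_pos rfl, add_comm]
      exact Nat.cast_add_one_ne_zero _
    have e4 : tf (n+1) = tf n * (1 - t ^ (n+1)) := by rw [tf, prod_range_succ]; rfl
    rw [e4, ← key_sum ν B hB, Ss_succ, sum_mul, mul_sum, mul_sum]
    apply sum_congr rfl
    intro p _
    have := ih (del ν p) (hd p)
    rw [e1 p, e2 p]
    have h3 := e3 p
    field_simp
    linear_combination (t ^ LL ν (ν p + 1) * (1 - t ^ mm ν (ν p))) * this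

theorem stb_eq {n : ℕ} (ν : Fin n → ℕ) (B : ℕ) (hB : ∀ i, ν i < B) :
    stb ν = ∏ v ∈ range B, (mm ν v).factorial := by
  have h1 : stb ν = (univ.filter fun σ : Equiv.Perm (Fin n) => ν ∘ σ = ν).card := by
    unfold stb
    apply card_equiv (Equiv.mulRight (Fin.revPerm : Equiv.Perm (Fin n)))
    intro σ
    simp only [mem_filter, mem_univ, true_and, Equiv.coe_mulRight]
    constructor
    · intro h; funext i; have := congrFun h (Fin.rev i); simpa using this
    · intro h; funext i; have := congrFun h (Fin.rev i); simpa using this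
  rw [h1, ← Fintype.card_subtype, DomMulAct.stabilizer_card']
  have h2 : ∀ v, Fintype.card {a // ν a = v} = mm ν v := by
    intro v
    rw [Fintype.card_subtype, card_filter, mm]
  simp only [h2]
  apply prod_subset
  · intro v hv
    obtain ⟨i, _, rfl⟩ := mem_image.1 hv
    exact mem_range.2 (hB i)
  · intro v _ hv
    have : mm ν v = 0 := by
      unfold mm
      exact sum_eq_zero fun i _ => if_neg fun h => hv (mem_image.2 ⟨i, mem_univ _, h⟩)
    rw [this, Nat.factorial_zero]

theorem stb_S {n : ℕ} (ν : Fin n → ℕ) (B : ℕ) (hB : ∀ i, ν i < B) :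
    Ss ν * ∏ v ∈ range B, tf (mm ν v) = stb ν * tf n := by
  rw [Ss_closed ν B hB, stb_eq ν B hB]; push_cast; rfl

end Stmt19P

open Finset MvPolynomial Stmt19
namespace Stmt19P
set_option linter.unusedSimpArgs false

/-- extension by zero -/
def kx {n : ℕ} (κ : Fin n → ℕ) (b : ℕ) : ℕ := if h : b < n then κ ⟨b, h⟩ else 0

theorem kx_val {n : ℕ} (κ : Fin n → ℕ) (b : Fin n) : kx κ b = κ b := by simp [kx]

theorem kx_anti {n : ℕ} (κ : Fin n → ℕ) (hκ : Antitone κ) : Antitone (kx κ) := by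
  intro a b hab
  unfold kx
  split_ifs with h1 h2
  · exact hκ (by simpa using hab)
  · omega
  · omega
  · omega

theorem prodFin {n : ℕ} {M : Type*} [CommMonoid M] (F : ℕ → M) (a : Fin n) (h : ∀ b, b < (a:ℕ) → F b = 1) :
    ∏ b : Fin n, F b = ∏ s ∈ range (n - a), F (a + s) := by
  rw [Fin.prod_univ_eq_prod_range]
  have : n = a + (n - a) := by omega
  conv_lhs => rw [this]
  rw [prod_range_add, prod_eq_one (fun x hx => h x (mem_range.1 hx)), one_mul]

theorem sumFin {n : ℕ} (F : ℕ → ℕ) (a : Fin n) (h : ∀ b, b < (a:ℕ) → F b = 0) :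
    ∑ b : Fin n, F b = ∑ s ∈ range (n - a), F (a + s) := by
  rw [Fin.sum_univ_eq_sum_range]
  have : n = a + (n - a) := by omega
  conv_lhs => rw [this]
  rw [sum_range_add, sum_eq_zero (fun x hx => h x (mem_range.1 hx)), zero_add]

theorem tele (g : ℕ → K) (hg : ∀ s, g s ≠ 0) (p : ℕ → Prop) [DecidablePred p]
    (hp : ∀ s s', s ≤ s' → p s' → p s) (m : ℕ) :
    (∏ s ∈ range m, if p s then 1 else g (s+1) / g s) * g (∑ s ∈ range m, if p s then 1 else 0) = g m := by
  induction m with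
  | zero => simp
  | succ m ih =>
    by_cases h : p m
    · have h1 : ∀ s ∈ range (m+1), p s := fun s hs => hp s m (by have := mem_range.1 hs; omega) h
      rw [prod_eq_one (fun s hs => if_pos (h1 s hs)), sum_congr rfl (fun s hs => if_pos (h1 s hs))]
      simp
    · rw [prod_range_succ, sum_range_succ, if_neg h, if_neg h, add_zero, mul_right_comm, ih]
      have := hg m
      field_simp

/-- number of later parts -/
def cnt {n : ℕ} (κ : Fin n → ℕ) (a : Fin n) (d : ℕ) : ℕ := ∑ b : Fin n, if a ≤ b ∧ κ a ≤ κ b + d then 1 else 0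

theorem row_step {n : ℕ} (κ : Fin n → ℕ) (hκ : Antitone κ) (a : Fin n) (e : ℕ) :
    (∏ b : Fin n, if a < b ∧ κ b + (e+1) < κ a then Ff (e+1) ((b:ℕ) - a) else 1) *
      (1 - q ^ (e+1) * t ^ cnt κ a (e+1)) = 1 - q ^ (e+1) * t ^ (n - (a:ℕ)) := by
  have h1 : cnt κ a (e+1) = ∑ s ∈ range (n - a), if κ a ≤ kx κ (a + s) + (e+1) then 1 else 0 := by
    rw [cnt, ← sum_congr rfl fun b _ => (by simp only [kx_val, Fin.le_def] :
      (if (a:ℕ) ≤ ((b : Fin n):ℕ) ∧ κ a ≤ kx κ b + (e+1) then 1 else 0) = (if a ≤ b ∧ κ a ≤ κ b + (e+1) then 1 else 0)),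
      sumFin (fun b => if (a:ℕ) ≤ b ∧ κ a ≤ kx κ b + (e+1) then 1 else 0) a]
    · apply sum_congr rfl
      intro s _
      simp
    · intro b hb
      rw [if_neg (by omega)]
  have h2 : (∏ b : Fin n, if a < b ∧ κ b + (e+1) < κ a then Ff (e+1) ((b:ℕ) - a) else 1) =
      ∏ s ∈ range (n - a), if κ a ≤ kx κ (a + s) + (e+1) then 1 else 
        (1 - q ^ (e+1) * t ^ (s+1)) / (1 - q ^ (e+1) * t ^ s) := by
    rw [← prod_congr rfl fun b _ => (by simp only [kx_val, Fin.lt_def] :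
      (if (a:ℕ) < ((b : Fin n):ℕ) ∧ kx κ b + (e+1) < κ a then Ff (e+1) ((b:ℕ) - a) else 1) = 
        (if a < b ∧ κ b + (e+1) < κ a then Ff (e+1) ((b:ℕ) - a) else 1)),
      prodFin (fun b => if (a:ℕ) < b ∧ kx κ b + (e+1) < κ a then Ff (e+1) (b - a) else 1) a]
    · apply prod_congr rfl
      intro s _
      rcases Nat.eq_zero_or_pos s with rfl | hs
      · simp [kx_val]
      · by_cases h : κ a ≤ kx κ (a + s) + (e+1)
        · rw [if_pos h, if_neg (by omega)]
        · rw [if_neg h, if_pos (by omega), Ff, Nat.add_sub_cancel_left]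
    · intro b hb
      rw [if_neg (by omega)]
  rw [h1, h2]
  exact tele (fun s => 1 - q ^ (e+1) * t ^ s) (fun s => qt_ne _ _ (by omega))
    (fun s => κ a ≤ kx κ (a + s) + (e+1)) (fun s s' h h' => by
      have := kx_anti κ hκ (show (a:ℕ) + s ≤ a + s' by omega)
      omega) (n - a)

theorem Bf_ext (d M s : ℕ) (h : d ≤ M) : Bf d s = ∏ e ∈ range M, if e < d then Ff (e+1) s else 1 := by
  rw [← prod_filter, Bf]
  apply prod_congr _ (fun _ _ => rfl)
  ext e
  simp only [mem_filter, mem_range]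
  omega

theorem row_prod {n : ℕ} (κ : Fin n → ℕ) (hκ : Antitone κ) (a : Fin n) :
    (∏ b : Fin n, if a < b then Bf (κ a - κ b - 1) ((b:ℕ) - a) else 1) *
      ∏ e ∈ range (κ a - 1), (1 - q ^ (e+1) * t ^ cnt κ a (e+1)) =
    ∏ e ∈ range (κ a - 1), (1 - q ^ (e+1) * t ^ (n - (a:ℕ))) := by
  rw [← prod_congr rfl fun e _ => row_step κ hκ a e, prod_mul_distrib, prod_comm]
  congr 1
  apply prod_congr rfl
  intro b _
  by_cases h : a < b
  · rw [if_pos h, Bf_ext _ (κ a - 1) _ (by omega)]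
    apply prod_congr rfl
    intro e _
    by_cases h2 : e < κ a - κ b - 1
    · rw [if_pos h2, if_pos ⟨h, by omega⟩]
    · rw [if_neg h2, if_neg (by omega)]
  · rw [if_neg h, prod_eq_one]
    intro e _
    rw [if_neg (fun h' => h h'.1)]

theorem row_full {n : ℕ} (κ : Fin n → ℕ) (hκ : Antitone κ) (a : Fin n) :
    (∏ b : Fin n, if a < b then Bf (κ a - κ b - 1) ((b:ℕ) - a) else 1) * (1 - t ^ (n - (a:ℕ))) *
      ∏ e ∈ range (κ a), (1 - q ^ e * t ^ cnt κ a e) =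
    (1 - t ^ cnt κ a 0) * ∏ e ∈ range (κ a), (1 - q ^ e * t ^ (n - (a:ℕ))) := by
  have := row_prod κ hκ a
  rcases Nat.eq_zero_or_pos (κ a) with h | h
  · have hc : cnt κ a 0 = n - a := by
      have hb : ∀ b : Fin n, (if a ≤ b ∧ κ a ≤ κ b + 0 then 1 else 0) = (if (a:ℕ) ≤ (b:ℕ) then 1 else 0) := by
        intro b
        simp only [h, Fin.le_def, Nat.zero_le, and_true]
      rw [cnt, sum_congr rfl fun b _ => hb b, sumFin (fun b => if (a:ℕ) ≤ b then 1 else 0) a]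
      · rw [sum_congr rfl (fun s _ => if_pos (by omega)), sum_const, card_range, smul_eq_mul, mul_one]
      · intro b hb; rw [if_neg (by omega)]
    rw [h] at this ⊢
    rw [hc]
    simp only [zero_tsub, range_zero, prod_empty, mul_one] at this ⊢
    rw [this, one_mul]
  · obtain ⟨k, hk⟩ : ∃ k, κ a = k + 1 := ⟨κ a - 1, by omega⟩
    rw [hk, Nat.add_sub_cancel] at this
    rw [hk, prod_range_succ', prod_range_succ', pow_zero, one_mul, one_mul]
    linear_combination ((1 - t ^ (n - (a:ℕ))) * (1 - t ^ cnt κ a 0)) * this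

theorem leg_cnt {n : ℕ} (κ : Fin n → ℕ) (hκ : Antitone κ) (a : Fin n) (j : ℕ) (h2 : j ≤ κ a) :
    leg n κ a j + 1 = cnt κ a (κ a - j) := by
  have h3 : 1 = ∑ b : Fin n, if b = a then 1 else 0 := by simp
  rw [leg, card_filter, card_filter]
  conv_lhs => rw [h3]
  rw [cnt, ← sum_add_distrib, ← sum_add_distrib]
  apply sum_congr rfl
  intro b _
  rcases lt_trichotomy a b with h | h | h
  · have := hκ h.le
    have e1 : ¬ b < a := not_lt.2 h.le
    simp only [h, h.le, e1, h.ne', true_and, false_and, if_false, add_zero]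
    split_ifs <;> omega
  · subst h
    simp
  · have := hκ h.le
    have e1 : ¬ a < b := not_lt.2 h.le
    simp only [h, not_le.2 h, e1, h.ne, true_and, false_and, if_false, zero_add, add_zero]
    split_ifs <;> omega

theorem card_lt {n : ℕ} (a : Fin n) : (univ.filter fun l => l < a).card = (a : ℕ) := by
  have : (univ.filter fun l => l < a) = Finset.Iio a := by
    ext l
    rw [mem_filter, Finset.mem_Iio]
    exact ⟨fun h => h.2, fun h => ⟨mem_univ _, h⟩⟩
  rw [this, Fin.card_Iio]

theorem legCo_anti {n : ℕ} (κ : Fin n → ℕ) (hκ : Antitone κ) (a : Fin n) : legCo n κ a = a := by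
  rw [legCo_eq]
  have : (univ.filter fun l => rl κ a l) = univ.filter (fun l => l < a) := by
    apply filter_congr
    intro l _
    constructor
    · rintro (h | h)
      · by_contra h2
        exact absurd (hκ (not_lt.1 h2)) (not_le.2 h)
      · exact h.2
    · intro h
      rcases (hκ h.le).lt_or_eq with h2 | h2
      · exact Or.inl h2
      · exact Or.inr ⟨h2, h⟩
  rw [this]
  exact card_lt a

theorem prod_Icc_sub {M : Type*} [CommMonoid M] (k : ℕ) (f : ℕ → M) : ∏ j ∈ Icc 1 k, f (k - j) = ∏ e ∈ range k, f e := by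
  rw [← prod_range_reflect, ← Ico_succ_right_eq_Icc, prod_Ico_eq_prod_range]
  apply prod_congr rfl
  intro e _
  congr 1
  omega

theorem prod_Icc_pred {M : Type*} [CommMonoid M] (k : ℕ) (f : ℕ → M) : ∏ j ∈ Icc 1 k, f (j - 1) = ∏ e ∈ range k, f e := by
  rw [← Ico_succ_right_eq_Icc, prod_Ico_eq_prod_range]
  apply prod_congr rfl
  intro e _
  congr 1
  omega

theorem hP_eq {n : ℕ} (κ : Fin n → ℕ) (hκ : Antitone κ) : hP n κ = ∏ a, ∏ e ∈ range (κ a), (1 - q ^ e * t ^ cnt κ a e) := by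
  unfold hP
  apply prod_congr rfl
  intro a _
  rw [← prod_Icc_sub]
  apply prod_congr rfl
  intro j hj
  rw [leg_cnt κ hκ a j (mem_Icc.1 hj).2]

theorem bP_eq {n : ℕ} (κ : Fin n → ℕ) (hκ : Antitone κ) : bP n κ = ∏ a : Fin n, ∏ e ∈ range (κ a), (1 - q ^ e * t ^ (n - (a:ℕ))) := by
  unfold bP
  apply prod_congr rfl
  intro a _
  rw [← prod_Icc_pred]
  apply prod_congr rfl
  intro j hj
  rw [legCo_anti κ hκ]

theorem tf_eq (n : ℕ) : tf n = ∏ a : Fin n, (1 - t ^ (n - (a:ℕ))) := by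
  rw [Fin.prod_univ_eq_prod_range (fun a => 1 - t ^ (n - a)), tf, ← prod_range_reflect]
  apply prod_congr rfl
  intro e he
  have := mem_range.1 he
  congr 2
  omega

theorem lTot_eq {n : ℕ} (κ : Fin n → ℕ) (hκ : Antitone κ) : lTot n κ = ∑ a : Fin n, (a:ℕ) * κ a := by
  unfold lTot
  have h1 : ∀ a : Fin n, ∑ j ∈ Icc 1 (κ a), leg n κ a j = ∑ b : Fin n, if a < b then κ b else 0 := by
    intro a
    have : ∀ j ∈ Icc 1 (κ a), leg n κ a j = ∑ b : Fin n, if a < b ∧ j ≤ κ b then 1 else 0 := by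
      intro j hj
      rw [leg, card_filter, card_filter, ← sum_add_distrib]
      apply sum_congr rfl
      intro b _
      rcases lt_or_ge a b with h | h
      · have := hκ h.le
        have e1 : ¬ b < a := not_lt.2 h.le
        simp [h, e1, this]
      · have := hκ h
        have e1 : ¬ a < b := not_lt.2 h
        rw [if_neg (fun h => e1 h.1), if_neg (by omega), if_neg (fun h => e1 h.1)]
    rw [sum_congr rfl this, sum_comm]
    apply sum_congr rfl
    intro b _
    by_cases h : a < b
    · have := hκ h.le
      simp only [h, true_and, if_true]
      rw [← sum_filter, sum_const, smul_eq_mul, mul_one]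
      have : (Icc 1 (κ a)).filter (fun j => j ≤ κ b) = Icc 1 (κ b) := by
        ext j; simp only [mem_filter, mem_Icc]; omega
      rw [this]; simp
    · simp [h]
  rw [sum_congr rfl fun a _ => h1 a, sum_comm]
  apply sum_congr rfl
  intro b _
  rw [← sum_filter, sum_const, smul_eq_mul]
  congr 1
  exact card_lt b

theorem Vp_eq {n : ℕ} (κ : Fin n → ℕ) (hκ : Antitone κ) : Vp (κ ∘ Fin.rev) =
    ∏ a : Fin n, ∏ b : Fin n, if a < b then Bf (κ a - κ b - 1) ((b:ℕ) - a) else 1 := by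
  obtain ⟨r, hr, hr2⟩ := legCo_sort κ hκ Fin.revPerm
  have hr2 : κ ∘ Fin.rev = κ ∘ r := hr2
  have hr : ∀ i, ((r i : Fin n) : ℕ) = legCo n (κ ∘ Fin.rev) i := hr
  have hmono : Monotone (κ ∘ Fin.rev) := hκ.comp (fun a b h => Fin.rev_le_rev.2 h)
  rw [Vp, Fintype.prod_prod_type, ← Equiv.prod_comp r (fun a : Fin n => ∏ b : Fin n, if a < b then Bf (κ a - κ b - 1) ((b:ℕ) - a) else 1)]
  apply prod_congr rfl
  intro i _
  rw [← Equiv.prod_comp r (fun b : Fin n => if r i < b then Bf (κ (r i) - κ b - 1) ((b:ℕ) - r i) else 1)]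
  apply prod_congr rfl
  intro j _
  have h1 : r i < r j ↔ rl (κ ∘ Fin.rev) j i := by rw [rl_iff, Fin.lt_def, hr, hr]
  simp only [Gf, h1]
  by_cases h : rl (κ ∘ Fin.rev) j i
  · rw [if_pos h, if_pos h, ← hr, ← hr]
    have e1 : κ (r i) = (κ ∘ Fin.rev) i := by rw [hr2]; rfl
    have e2 : κ (r j) = (κ ∘ Fin.rev) j := by rw [hr2]; rfl
    rw [e1, e2]
    by_cases hji : j < i
    · rw [if_pos hji]
    · have := hmono (not_lt.1 hji)
      congr 1
      omega
  · rw [if_neg h, if_neg h]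

theorem D_eq {n : ℕ} (ν : Fin n → ℕ) (B : ℕ) (hB : ∀ i, ν i < B) :
    ∏ v ∈ range B, tf (mm ν v) = ∏ a : Fin n, (1 - t ^ ∑ b : Fin n, if a ≤ b ∧ ν a = ν b then 1 else 0) := by
  induction n with
  | zero => simp [mm, tf]
  | succ n ih =>
    rw [Fin.prod_univ_succ]
    have hp := mem_range.2 (hB 0)
    have hd : del ν 0 = fun i => ν i.succ := by funext i; simp [del]
    have e1 : ∏ v ∈ range B, tf (mm ν v) = (1 - t ^ mm ν (ν 0)) * ∏ v ∈ range B, tf (mm (fun i => ν i.succ) v) := by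
      rw [← hd, ← mul_prod_erase _ _ hp, ← mul_prod_erase _ _ hp, ← mul_assoc]
      congr 1
      · rw [mm_del ν 0, if_pos rfl, add_comm, tf, prod_range_succ, mul_comm]; rfl
      · apply prod_congr rfl
        intro v hv
        rw [mm_del ν 0, if_neg (ne_of_mem_erase hv).symm, zero_add]
    rw [e1, ih _ (fun i => hB _)]
    congr 1
    · congr 2
      unfold mm
      apply sum_congr rfl
      intro b _
      simp [eq_comm]
    · apply prod_congr rfl
      intro a _
      rw [Fin.sum_univ_succ]
      simp

theorem cnt_zero {n : ℕ} (κ : Fin n → ℕ) (hκ : Antitone κ) (a : Fin n) :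
    cnt κ a 0 = ∑ b : Fin n, if a ≤ b ∧ κ a = κ b then 1 else 0 := by
  unfold cnt
  apply sum_congr rfl
  intro b _
  by_cases h : a ≤ b
  · have := hκ h
    simp only [h, true_and, add_zero]
    split_ifs <;> omega
  · simp [h]

theorem tf_ne (m : ℕ) : tf m ≠ 0 := by
  apply prod_ne_zero_iff.2
  intro i _
  have := qt_ne 0 (i+1) (by omega)
  simpa using this

theorem main_succ {N : ℕ} {T : ℕ → P (N+1) →ₗ[K] P (N+1)} (hT : IsDL (N+1) t T) (κ : Fin (N+1) → ℕ) (hκ : Antitone κ)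
    (Pp : P (N+1)) (hPp : IsSymMac (N+1) q t T κ Pp) :
    ev N Pp * hP (N+1) κ = t ^ lTot (N+1) κ * bP (N+1) κ := by
  obtain ⟨h1, h2, _, h4⟩ := hPp
  have hv := value_pre hT κ hκ Pp h1 h4 h2
  obtain ⟨r, hr, hr2⟩ := legCo_sort κ hκ Fin.revPerm
  have hr2 : κ ∘ Fin.rev = κ ∘ r := hr2
  have hr : ∀ i, ((r i : Fin (N+1)) : ℕ) = legCo (N+1) (κ ∘ Fin.rev) i := hr
  have hl : ∑ i, legCo (N+1) (κ ∘ Fin.rev) i * (κ ∘ Fin.rev) i = lTot (N+1) κ := by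
    rw [lTot_eq κ hκ, ← Equiv.sum_comp r (fun a : Fin (N+1) => (a:ℕ) * κ a)]
    apply sum_congr rfl
    intro i _
    rw [← hr, hr2]; rfl
  rw [Vv, pow_add, hl] at hv
  obtain ⟨B, hB⟩ : ∃ B, ∀ i, κ i < B := ⟨κ 0 + 1, fun i => by have := hκ (Fin.zero_le i); omega⟩
  have hS := stb_S κ B hB
  set D := ∏ v ∈ range B, tf (mm κ v) with hD
  have hD0 : D ≠ 0 := prod_ne_zero_iff.2 fun v _ => tf_ne _
  have hev : ev N Pp * D = t ^ lTot (N+1) κ * (Vp (κ ∘ Fin.rev) * tf (N+1)) := by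
    apply mul_right_cancel₀ (stb_ne κ)
    linear_combination D * hv + t ^ iv (κ ∘ Fin.rev) * t ^ lTot (N+1) κ * Vp (κ ∘ Fin.rev) * hS
  have hrow : Vp (κ ∘ Fin.rev) * tf (N+1) * hP (N+1) κ = D * bP (N+1) κ := by
    rw [hD, D_eq κ B hB, Vp_eq κ hκ, tf_eq, hP_eq κ hκ, bP_eq κ hκ, ← prod_mul_distrib, ← prod_mul_distrib,
      ← prod_mul_distrib]
    apply prod_congr rfl
    intro a _
    rw [row_full κ hκ a, cnt_zero κ hκ]
  apply mul_left_cancel₀ hD0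
  linear_combination hP (N+1) κ * hev + t ^ lTot (N+1) κ * hrow

end Stmt19P


theorem stmt_19 (n : ℕ) (κ : Fin n → ℕ) (hκ : Antitone κ)
    (T : ℕ → P n →ₗ[K] P n) (hT : IsDL n t T)
    (Pp : P n) (hPp : IsSymMac n q t T κ Pp) :
    eval (fun i : Fin n => t ^ (i : ℕ)) Pp * hP n κ = t ^ lTot n κ * bP n κ := by
  rcases n with _ | N
  · have h2 := hPp.2.1
    rw [eq_C_of_isEmpty Pp] at h2 ⊢
    have h3 : (Finsupp.equivFunOnFinite.symm κ : Fin 0 →₀ ℕ) = 0 := Subsingleton.elim _ _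
    rw [h3] at h2
    simp only [coeff_zero_C] at h2
    rw [eval_C, h2]
    simp [hP, bP, lTot]
  · exact Stmt19P.main_succ hT κ hκ Pp hPp
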